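/- arXiv:1703.07058 — 4 statements merged into one kernel-verified Lean document; each statement's English description precedes it below -/
import Mathlib

section
/- Let n, k, l be integers with 1 ≤ k ≤ l and 2l < n, and let L be the Laplacian matrix of the I-graph I(n,k,l). Let 𝒜 be the companion matrix of the polynomial F(X) = (3X^k − X^{2k} − 1)(3X^l − X^{2l} − 1) − X^{k+l}. Then the cokernel of L is isomorphic as a ℤ-module to the cokernel of 𝒜^n − I, i.e. ℤ^{2n} / im(L) ≅ ℤ^{2(k+l)} / im(𝒜^n − I). -/
open Polynomial

/-- The relation generating the I-graph `I(n,k,l)`: `u_i ~ u_{i+l}`, `v_i ~ v_{i+k}`,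
`u_i ~ v_i` (the left summand are the `u`'s with step `l`, the right summand the `v`'s
with step `k`). -/
def IRel (n k l : ℕ) : (ZMod n ⊕ ZMod n) → (ZMod n ⊕ ZMod n) → Prop
  | .inl i, .inl j => j = i + (l : ZMod n)
  | .inr i, .inr j => j = i + (k : ZMod n)
  | .inl i, .inr j => i = j
  | .inr _, .inl _ => False

/-- The I-graph `I(n,k,l)`. -/
def IGraph (n k l : ℕ) : SimpleGraph (ZMod n ⊕ ZMod n) :=
  SimpleGraph.fromRel (IRel n k l)

noncomputable instance (n k l : ℕ) : DecidableRel (IGraph n k l).Adj :=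
  fun _ _ => Classical.dec _

/-- The number of spanning trees of the I-graph `I(n,k,l)`. -/
noncomputable def tauI (n k l : ℕ) : ℕ :=
  Nat.card {H : (IGraph n k l).Subgraph // H.IsSpanning ∧ H.coe.IsTree}

/-- The Laplacian matrix `L = D - A` of the I-graph, with entries in `R`. -/
noncomputable def lapI (n k l : ℕ) [NeZero n] (R : Type) [AddGroupWithOne R] :
    Matrix (ZMod n ⊕ ZMod n) (ZMod n ⊕ ZMod n) R :=
  (IGraph n k l).lapMatrix R

/-- The cokernel of a square integer matrix, viewed as a `ℤ`-linear map. -/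
abbrev cokerM {m : Type} [Fintype m] [DecidableEq m] (M : Matrix m m ℤ) : Type :=
  (m → ℤ) ⧸ LinearMap.range M.mulVecLin

/-- The polynomial `F(X) = (3X^k - X^{2k} - 1)(3X^l - X^{2l} - 1) - X^{k+l}`. -/
noncomputable def FpolyI (k l : ℕ) : Polynomial ℤ :=
  (3 * X ^ k - X ^ (2 * k) - 1) * (3 * X ^ l - X ^ (2 * l) - 1) - X ^ (k + l)

/-- The companion matrix of a (monic, degree `s`) polynomial
`F = X^s + a_{s-1} X^{s-1} + ⋯ + a_0`: ones on the superdiagonal and last row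
`(-a_0, …, -a_{s-1})`. -/
noncomputable def companionM (F : Polynomial ℤ) (s : ℕ) : Matrix (Fin s) (Fin s) ℤ :=
  fun i j => if (i : ℕ) = s - 1 then -F.coeff j
    else if (j : ℕ) = (i : ℕ) + 1 then 1 else 0

/-- The Jacobian group of the I-graph `I(n,k,l)`: the torsion subgroup of the cokernel of
the Laplacian. -/
noncomputable def JacI (n k l : ℕ) [NeZero n] : AddSubgroup (cokerM (lapI n k l ℤ)) :=
  AddCommGroup.torsion (cokerM (lapI n k l ℤ))

/-!
Both cokernels are `ℤ[X] / (F, X ^ n - 1)`.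

Identify functions on each copy of `ℤ/n` with elements of `ℤ[X] / (X ^ n - 1)`. The Laplacian
becomes `[[a, -1], [-1, b]]` with `a = 3 - x ^ l - x ^ (-l)` and `b = 3 - x ^ k - x ^ (-k)`, so its
cokernel is the quotient by `a * b - 1`, which is `F(x)` up to the unit `x ^ (k + l)`.
On the other side the Horner polynomials of `F` form a basis of `ℤ[X] / (F)` in which the companion
matrix is multiplication by `X`, so the cokernel of `𝒜 ^ n - 1` is the quotient by `X ^ n - 1`.
-/

open scoped Matrix

section Quotients

variable {R M N : Type*}

lemma map_range_of_comp_eq [Semiring R] [AddCommMonoid M] [AddCommMonoid N] [Module R M]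
    [Module R N] (e : M ≃ₗ[R] N) {f : M →ₗ[R] M} {g : N →ₗ[R] N}
    (h : e.toLinearMap ∘ₗ f = g ∘ₗ e.toLinearMap) :
    (LinearMap.range f).map e.toLinearMap = LinearMap.range g := by
  rw [← LinearMap.range_comp, h, LinearEquiv.range_comp]

lemma range_mulLeft_eq_restrictScalars_span {A : Type*} [CommSemiring R] [CommSemiring A]
    [Algebra R A] (a : A) :
    LinearMap.range (LinearMap.mulLeft R a) = (Ideal.span {a}).restrictScalars R := by
  ext x
  simp only [LinearMap.mem_range, LinearMap.mulLeft_apply, Submodule.restrictScalars_mem,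
    Ideal.mem_span_singleton, Dvd.dvd, eq_comm]

/-- Killing `a` and then `b` in a commutative ring gives the same quotient as killing `b` and then
`a`: the principal case of `DoubleQuot.quotQuotEquivCommₐ`. -/
noncomputable def quotQuotSpanSingletonComm (R : Type*) {A : Type*} [CommSemiring R] [CommRing A]
    [Algebra R A] (a b : A) :
    ((A ⧸ Ideal.span {a}) ⧸ Ideal.span {Ideal.Quotient.mk (Ideal.span {a}) b}) ≃ₐ[R]
      (A ⧸ Ideal.span {b}) ⧸ Ideal.span {Ideal.Quotient.mk (Ideal.span {b}) a} :=
  have hmap (c d : A) : (Ideal.span {d}).map (Ideal.Quotient.mkₐ R (Ideal.span {c})) =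
      Ideal.span {Ideal.Quotient.mk (Ideal.span {c}) d} := by
    rw [Ideal.map_span, Set.image_singleton, Ideal.Quotient.mkₐ_eq_mk]
  (Ideal.quotientEquivAlgOfEq R (hmap a b).symm).trans <|
    (DoubleQuot.quotQuotEquivCommₐ R (Ideal.span {a}) (Ideal.span {b})).trans <|
      Ideal.quotientEquivAlgOfEq R (hmap b a)

end Quotients

section Coupling

variable {R : Type*} [CommRing R] (a b : R)

/-- The endomorphism of `R × R` with matrix `[[a, -1], [-1, b]]`: the shape a Laplacian takes when
two copies of a circulant vertex set are joined by a perfect matching. -/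
def coupling : R × R →ₗ[R] R × R :=
  (a • LinearMap.fst R R R - LinearMap.snd R R R).prod
    (b • LinearMap.snd R R R - LinearMap.fst R R R)

lemma coupling_apply (y : R × R) : coupling a b y = (a * y.1 - y.2, b * y.2 - y.1) := rfl

lemma mem_range_coupling_iff (y : R × R) :
    y ∈ LinearMap.range (coupling a b) ↔ a * b - 1 ∣ y.1 + a * y.2 := by
  constructor
  · rintro ⟨z, rfl⟩
    exact ⟨z.2, by simp only [coupling_apply]; ring⟩
  · rintro ⟨c, hc⟩
    refine ⟨(b * c - y.2, c), ?_⟩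
    ext <;> simp only [coupling_apply]
    · linear_combination -hc
    · ring

/-- The cokernel of `coupling a b` is cyclic: modulo its image `(0, 1) = a • (1, 0)`, which leaves
the relation `a * b = 1`. -/
noncomputable def couplingCokerEquiv :
    ((R × R) ⧸ LinearMap.range (coupling a b)) ≃ₗ[R] R ⧸ Ideal.span {a * b - 1} :=
  let π : R × R →ₗ[R] R ⧸ Ideal.span {a * b - 1} :=
    Submodule.mkQ _ ∘ₗ (LinearMap.fst R R R + a • LinearMap.snd R R R)
  have hπ : Function.Surjective π :=
    (Submodule.mkQ_surjective _).comp fun r ↦ ⟨(r, 0), by simp⟩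
  have hker : LinearMap.range (coupling a b) = LinearMap.ker π := by
    ext y
    rw [mem_range_coupling_iff, LinearMap.mem_ker, LinearMap.comp_apply, Submodule.mkQ_apply,
      Submodule.Quotient.mk_eq_zero, Ideal.mem_span_singleton]
    rfl
  Submodule.quotEquivOfEq _ _ hker ≪≫ₗ π.quotKerEquivOfSurjective hπ

end Coupling

section DivX

lemma coeff_divX_iterate {R : Type*} [Semiring R] (p : R[X]) (j m : ℕ) :
    (divX^[j] p).coeff m = p.coeff (m + j) := by
  induction j generalizing m with
  | zero => rfl
  | succ j ih => rw [Function.iterate_succ_apply', coeff_divX, ih, add_right_comm, add_assoc]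

lemma X_mul_divX_iterate_succ {R : Type*} [CommRing R] (p : R[X]) (j : ℕ) :
    X * divX^[j + 1] p = divX^[j] p - C (p.coeff j) := by
  rw [Function.iterate_succ_apply', eq_sub_iff_add_eq]
  simpa only [coeff_divX_iterate, zero_add] using X_mul_divX_add (divX^[j] p)

lemma divX_iterate_natDegree_of_monic {R : Type*} [Semiring R] {p : R[X]} (hp : p.Monic) :
    divX^[p.natDegree] p = 1 := by
  ext m
  rw [coeff_divX_iterate, coeff_one]
  rcases m with _ | m
  · simp [hp]
  · rw [if_neg (by simp), coeff_eq_zero_of_natDegree_lt (by omega)]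

end DivX

section Companion

lemma companionM_mulVec_single_zero (F : ℤ[X]) (t : ℕ) :
    companionM F (t + 1) *ᵥ Pi.single 0 1 = -F.coeff 0 • Pi.single (Fin.last t) 1 := by
  ext i
  simp only [Matrix.mulVec_single_one, Matrix.col_apply, companionM, Pi.smul_apply,
    Pi.single_apply, Fin.ext_iff, smul_eq_mul, Fin.val_zero, Fin.val_last]
  split_ifs <;> first | omega | simp_all

lemma companionM_mulVec_single_succ (F : ℤ[X]) {t : ℕ} (j : Fin t) :
    companionM F (t + 1) *ᵥ Pi.single j.succ 1 =
      Pi.single j.castSucc 1 - F.coeff (j + 1) • Pi.single (Fin.last t) 1 := by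
  ext i
  simp only [Matrix.mulVec_single_one, Matrix.col_apply, companionM, Pi.sub_apply, Pi.smul_apply,
    Pi.single_apply, Fin.ext_iff, smul_eq_mul, Fin.val_succ, Fin.val_castSucc, Fin.val_last]
  split_ifs <;> omega

/-- The map `ℤ ^ s → ℤ[X] / (F)` sending the `j`-th unit vector to the Horner polynomial
`divX^[j + 1] F = a_{j+1} + a_{j+2} X + ⋯`. Unlike the power basis, for which multiplication by `X`
is the transpose of `companionM F s`, it carries `companionM F s` itself to multiplication by `X`.
-/
noncomputable def hornerMap (F : ℤ[X]) (s : ℕ) : (Fin s → ℤ) →ₗ[ℤ] AdjoinRoot F :=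
  Fintype.linearCombination ℤ fun j ↦ AdjoinRoot.mk F (divX^[j + 1] F)

variable {F : ℤ[X]} {s : ℕ}

lemma hornerMap_single (j : Fin s) :
    hornerMap F s (Pi.single j 1) = AdjoinRoot.mk F (divX^[j + 1] F) := by
  rw [hornerMap, Fintype.linearCombination_apply_single, one_smul]

lemma hornerMap_companionM_mulVec_single (hF : F.Monic) (hs : F.natDegree = s) (j : Fin s) :
    hornerMap F s (companionM F s *ᵥ Pi.single j 1) =
      AdjoinRoot.root F * hornerMap F s (Pi.single j 1) := by
  obtain _ | t := s
  · exact j.elim0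
  have hlast : hornerMap F (t + 1) (Pi.single (Fin.last t) 1) = 1 := by
    rw [hornerMap_single, Fin.val_last, ← hs, divX_iterate_natDegree_of_monic hF, map_one]
  have hC (c : ℤ) : AdjoinRoot.mk F (C c) = c • 1 := by
    simp
  rw [hornerMap_single, ← AdjoinRoot.mk_X, ← map_mul, X_mul_divX_iterate_succ, map_sub, hC]
  cases j using Fin.cases with
  | zero =>
    rw [companionM_mulVec_single_zero, map_smul, hlast, Fin.val_zero, Function.iterate_zero_apply,
      AdjoinRoot.mk_self, zero_sub, neg_smul]
  | succ j =>
    rw [companionM_mulVec_single_succ, map_sub, map_smul, hlast, hornerMap_single,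
      Fin.val_castSucc, Fin.val_succ]

lemma hornerMap_aeval_companionM_mulVec (hF : F.Monic) (hs : F.natDegree = s) (p : ℤ[X])
    (v : Fin s → ℤ) :
    hornerMap F s (aeval (companionM F s) p *ᵥ v) = AdjoinRoot.mk F p * hornerMap F s v := by
  have hX (v : Fin s → ℤ) : hornerMap F s (companionM F s *ᵥ v) =
      AdjoinRoot.root F * hornerMap F s v := by
    refine LinearMap.congr_fun (f := hornerMap F s ∘ₗ (companionM F s).mulVecLin)
      (g := LinearMap.mulLeft ℤ (AdjoinRoot.root F) ∘ₗ hornerMap F s)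
      ((Pi.basisFun ℤ (Fin s)).ext fun j ↦ ?_) v
    simpa using hornerMap_companionM_mulVec_single hF hs j
  induction p using Polynomial.induction_on generalizing v with
  | C c =>
    rw [aeval_C, Algebra.algebraMap_eq_smul_one, Matrix.smul_mulVec, Matrix.one_mulVec, map_smul,
      zsmul_eq_mul, ← map_intCast (AdjoinRoot.mk F), ← eq_intCast C]
  | add p q hp hq => rw [map_add, Matrix.add_mulVec, map_add, hp, hq, map_add, add_mul]
  | monomial m c h =>
    rw [pow_succ, ← mul_assoc, map_mul, aeval_X, ← Matrix.mulVec_mulVec, h, hX, map_mul _ _ X,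
      AdjoinRoot.mk_X, mul_assoc]

lemma hornerMap_surjective (hF : F.Monic) (hs : F.natDegree = s) :
    Function.Surjective (hornerMap F s) := by
  have hone : ∃ v, hornerMap F s v = 1 := by
    rw [← map_one (AdjoinRoot.mk F), ← divX_iterate_natDegree_of_monic hF, hs]
    obtain _ | t := s
    · exact ⟨0, by rw [map_zero, Function.iterate_zero_apply, AdjoinRoot.mk_self]⟩
    · exact ⟨Pi.single (Fin.last t) 1, hornerMap_single _⟩
  obtain ⟨v, hv⟩ := hone
  intro y
  obtain ⟨p, rfl⟩ := AdjoinRoot.mk_surjective y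
  exact ⟨_, by rw [hornerMap_aeval_companionM_mulVec hF hs, hv, mul_one]⟩

lemma hornerMap_injective (hF : F.Monic) (hs : F.natDegree = s) :
    Function.Injective (hornerMap F s) := by
  subst hs
  have := hF.finite_adjoinRoot
  exact OrzechProperty.injective_of_surjective_of_injective
    (AdjoinRoot.powerBasisAux' hF).equivFun.symm.toLinearMap _ (LinearEquiv.injective _)
    (hornerMap_surjective hF rfl)

/-- The cokernel of a polynomial `p` in the companion matrix of `F` is `ℤ[X] / (F, p)`. -/
noncomputable def cokerAevalCompanionEquiv (hF : F.Monic) (hs : F.natDegree = s) (p : ℤ[X]) :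
    cokerM (aeval (companionM F s) p) ≃ₗ[ℤ] AdjoinRoot F ⧸ Ideal.span {AdjoinRoot.mk F p} :=
  let e := LinearEquiv.ofBijective (hornerMap F s)
    ⟨hornerMap_injective hF hs, hornerMap_surjective hF hs⟩
  have he : e.toLinearMap ∘ₗ (aeval (companionM F s) p).mulVecLin =
      LinearMap.mulLeft ℤ (AdjoinRoot.mk F p) ∘ₗ e.toLinearMap :=
    LinearMap.ext (hornerMap_aeval_companionM_mulVec hF hs p)
  Submodule.Quotient.equiv _ _ e
      ((map_range_of_comp_eq e he).trans (range_mulLeft_eq_restrictScalars_span _)) ≪≫ₗ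
    Submodule.Quotient.restrictScalarsEquiv ℤ _

end Companion

section RootBasis

/-- The group ring `R[ℤ/n]`, presented as `R[X] / (X ^ n - 1)`. -/
abbrev CyclicRing (R : Type*) [CommRing R] (n : ℕ) : Type _ := AdjoinRoot (X ^ n - 1 : R[X])

variable (R : Type*) [CommRing R] (n : ℕ) [NeZero n]

/-- The tautological character `i ↦ x ^ i` of `ℤ/n`, with `x` the class of `X`; it makes sense of
exponents in `ℤ/n`, in particular of negative ones. -/
noncomputable def rootChar : AddChar (ZMod n) (CyclicRing R n) :=
  AddChar.zmodChar n (ζ := AdjoinRoot.root (X ^ n - 1 : R[X])) <| by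
    rw [← sub_eq_zero, ← AdjoinRoot.mk_X, ← map_pow, ← map_one (AdjoinRoot.mk _), ← map_sub,
      AdjoinRoot.mk_self]

lemma rootChar_natCast (m : ℕ) : rootChar R n m = AdjoinRoot.root (X ^ n - 1 : R[X]) ^ m :=
  AddChar.zmodChar_apply' _ m

/-- The group-element basis `(x ^ i)` of `R[X] / (X ^ n - 1)`, indexed by `i : ZMod n`. -/
noncomputable def rootCharBasis [Nontrivial R] : Module.Basis (ZMod n) R (CyclicRing R n) :=
  have hmonic : (X ^ n - 1 : R[X]).Monic := monic_X_pow_sub_C 1 (NeZero.ne n)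
  have hdeg : (X ^ n - 1 : R[X]).natDegree = n := natDegree_X_pow_sub_C (r := 1)
  (AdjoinRoot.powerBasis' hmonic).basis.reindex
    { toFun i := (i : ℕ)
      invFun i := ⟨i.val, i.val_lt.trans_eq hdeg.symm⟩
      left_inv i := Fin.ext (ZMod.val_cast_of_lt (i.isLt.trans_eq hdeg))
      right_inv := ZMod.natCast_zmod_val }

lemma rootCharBasis_apply [Nontrivial R] (i : ZMod n) : rootCharBasis R n i = rootChar R n i :=
  (Module.Basis.reindex_apply _ _ _).trans (PowerBasis.basis_eq_pow _ _)

end RootBasis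

lemma lapMatrix_mulVec_single {V R : Type*} [Fintype V] [DecidableEq V] [NonAssocRing R]
    (G : SimpleGraph V) [DecidableRel G.Adj] (v : V) :
    G.lapMatrix R *ᵥ Pi.single v 1 =
      G.degree v • Pi.single v 1 - ∑ w ∈ G.neighborFinset v, Pi.single w 1 := by
  ext w
  rw [SimpleGraph.lapMatrix_mulVec_apply]
  have hdeg : (G.degree w : R) * (Pi.single v 1 : V → R) w =
      (G.degree v • Pi.single v 1 : V → R) w := by
    obtain rfl | h := eq_or_ne w v
    · simp
    · simp [h]
  rw [hdeg, Pi.sub_apply, Finset.sum_apply]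
  simp only [Pi.single_apply, Finset.sum_ite_eq, Finset.sum_ite_eq', SimpleGraph.mem_neighborFinset,
    G.adj_comm]

lemma lapMatrix_mulVec_single_of_three_neighbors {V R : Type*} [Fintype V] [DecidableEq V]
    [NonAssocRing R] (G : SimpleGraph V) [DecidableRel G.Adj] {v a b c : V}
    (hadj : ∀ w, G.Adj v w ↔ w = a ∨ w = b ∨ w = c) (hab : a ≠ b) (hac : a ≠ c) (hbc : b ≠ c) :
    G.lapMatrix R *ᵥ Pi.single v 1 =
      3 • Pi.single v 1 - (Pi.single a 1 + Pi.single b 1 + Pi.single c 1) := by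
  have hN : G.neighborFinset v = {a, b, c} := by
    ext w
    simp only [SimpleGraph.mem_neighborFinset, hadj, Finset.mem_insert, Finset.mem_singleton]
  have ha : a ∉ ({b, c} : Finset V) := by
    simp only [Finset.mem_insert, Finset.mem_singleton, hab, hac, or_self, not_false_eq_true]
  rw [lapMatrix_mulVec_single, ← SimpleGraph.card_neighborFinset_eq_degree, hN,
    Finset.sum_insert ha, Finset.sum_pair hbc, Finset.card_insert_of_notMem ha,
    Finset.card_pair hbc, add_assoc]

section IGraph

variable {n k l : ℕ}

lemma natCast_ne_neg_of_two_mul_lt {m : ℕ} (hm : 1 ≤ m) (hmn : 2 * m < n) : (m : ZMod n) ≠ -m := by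
  rw [Ne, ← add_eq_zero_iff_eq_neg, ← Nat.cast_add, ZMod.natCast_eq_zero_iff]
  exact Nat.not_dvd_of_pos_of_lt (by omega) (by omega)

lemma IGraph_adj_inl_iff (hl : 1 ≤ l) (hln : 2 * l < n) (i : ZMod n) (w : ZMod n ⊕ ZMod n) :
    (IGraph n k l).Adj (.inl i) w ↔ w = .inl (i + l) ∨ w = .inl (i - l) ∨ w = .inr i := by
  have := natCast_ne_neg_of_two_mul_lt hl hln
  obtain j | j := w
  · simp only [IGraph, SimpleGraph.fromRel_adj, IRel, ne_eq, Sum.inl.injEq, reduceCtorEq]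
    grind
  · simp only [IGraph, SimpleGraph.fromRel_adj, IRel, ne_eq, Sum.inr.injEq, reduceCtorEq]
    grind

lemma IGraph_adj_inr_iff (hk : 1 ≤ k) (hkn : 2 * k < n) (i : ZMod n) (w : ZMod n ⊕ ZMod n) :
    (IGraph n k l).Adj (.inr i) w ↔ w = .inr (i + k) ∨ w = .inr (i - k) ∨ w = .inl i := by
  have := natCast_ne_neg_of_two_mul_lt hk hkn
  obtain j | j := w
  · simp only [IGraph, SimpleGraph.fromRel_adj, IRel, ne_eq, Sum.inl.injEq, reduceCtorEq]
    grind
  · simp only [IGraph, SimpleGraph.fromRel_adj, IRel, ne_eq, Sum.inr.injEq, reduceCtorEq]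
    grind

variable [NeZero n]

lemma lapI_mulVec_single_inl (hl : 1 ≤ l) (hln : 2 * l < n) (i : ZMod n) :
    lapI n k l ℤ *ᵥ Pi.single (.inl i) 1 = 3 • Pi.single (.inl i) 1 -
      (Pi.single (.inl (i + l)) 1 + Pi.single (.inl (i - l)) 1 + Pi.single (.inr i) 1) := by
  refine lapMatrix_mulVec_single_of_three_neighbors _ (IGraph_adj_inl_iff hl hln i) ?_ (by simp)
    (by simp)
  simpa [sub_eq_add_neg] using natCast_ne_neg_of_two_mul_lt hl hln

lemma lapI_mulVec_single_inr (hk : 1 ≤ k) (hkn : 2 * k < n) (i : ZMod n) :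
    lapI n k l ℤ *ᵥ Pi.single (.inr i) 1 = 3 • Pi.single (.inr i) 1 -
      (Pi.single (.inr (i + k)) 1 + Pi.single (.inr (i - k)) 1 + Pi.single (.inl i) 1) := by
  refine lapMatrix_mulVec_single_of_three_neighbors _ (IGraph_adj_inr_iff hk hkn i) ?_ (by simp)
    (by simp)
  simpa [sub_eq_add_neg] using natCast_ne_neg_of_two_mul_lt hk hkn

/-- The element `3 - x ^ m - x ^ (-m)` of `ℤ[X] / (X ^ n - 1)`: multiplication by it is the part of
the Laplacian of a cubic graph coming from the circulant edges of step `m`. -/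
noncomputable def lapSymbol (n : ℕ) [NeZero n] (m : ZMod n) : CyclicRing ℤ n :=
  3 - rootChar ℤ n m - rootChar ℤ n (-m)

/-- Integer functions on the vertices of an I-graph as pairs of elements of `ℤ[X] / (X ^ n - 1)`,
the indicators of `u_i` and `v_i` becoming `(x ^ i, 0)` and `(0, x ^ i)`. -/
noncomputable def vertexEquiv (n : ℕ) [NeZero n] :
    (ZMod n ⊕ ZMod n → ℤ) ≃ₗ[ℤ] CyclicRing ℤ n × CyclicRing ℤ n :=
  ((rootCharBasis ℤ n).prod (rootCharBasis ℤ n)).equivFun.symm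

lemma vertexEquiv_single (w : ZMod n ⊕ ZMod n) :
    vertexEquiv n (Pi.single w 1) =
      Sum.elim (fun i ↦ (rootChar ℤ n i, 0)) (fun i ↦ (0, rootChar ℤ n i)) w := by
  rw [vertexEquiv, Module.Basis.equivFun_symm_apply, Fintype.sum_eq_single w]
  · rcases w with i | i <;> simp [Module.Basis.prod_apply, rootCharBasis_apply]
  · intro v hv
    rw [Pi.single_eq_of_ne hv, zero_smul]

lemma vertexEquiv_comp_lapI (hk : 1 ≤ k) (hkn : 2 * k < n) (hl : 1 ≤ l) (hln : 2 * l < n) :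
    (vertexEquiv n).toLinearMap ∘ₗ (lapI n k l ℤ).mulVecLin =
      (coupling (lapSymbol n l) (lapSymbol n k)).restrictScalars ℤ ∘ₗ
        (vertexEquiv n).toLinearMap := by
  refine (Pi.basisFun ℤ (ZMod n ⊕ ZMod n)).ext ?_
  rintro (i | i) <;>
    simp only [Pi.basisFun_apply, LinearMap.comp_apply, Matrix.mulVecLin_apply,
      LinearEquiv.coe_coe, LinearMap.restrictScalars_apply, lapI_mulVec_single_inl hl hln,
      lapI_mulVec_single_inr hk hkn, map_sub, map_add, map_nsmul, vertexEquiv_single,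
      Sum.elim_inl, Sum.elim_inr, coupling_apply, lapSymbol, sub_eq_add_neg i,
      AddChar.map_add_eq_mul] <;>
    ext <;>
    simp only [Prod.smul_mk, nsmul_eq_mul, Nat.cast_ofNat, mul_zero, Prod.mk_add_mk, add_zero,
      zero_add, Prod.mk_sub_mk, zero_sub, sub_zero] <;>
    ring

lemma mk_FpolyI (n k l : ℕ) [NeZero n] :
    AdjoinRoot.mk (X ^ n - 1) (FpolyI k l) =
      rootChar ℤ n (k + l : ℕ) * (lapSymbol n l * lapSymbol n k - 1) := by
  have hinv (m : ℕ) : rootChar ℤ n m * rootChar ℤ n (-m) = 1 := by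
    rw [← AddChar.map_add_eq_mul, add_neg_cancel, AddChar.map_zero_eq_one]
  simp only [FpolyI, lapSymbol, Nat.cast_add, AddChar.map_add_eq_mul, map_sub, map_mul, map_pow,
    map_one, map_ofNat, AdjoinRoot.mk_X, mul_comm 2, pow_mul, pow_add, ← rootChar_natCast]
  have hk := hinv k
  have hl := hinv l
  generalize rootChar ℤ n k = x at *
  generalize rootChar ℤ n l = y at *
  generalize rootChar ℤ n (-k) = x' at *
  generalize rootChar ℤ n (-l) = y' at *
  have hx : x * (3 - x - x') = 3 * x - x ^ 2 - 1 := by linear_combination -hk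
  have hy : y * (3 - y - y') = 3 * y - y ^ 2 - 1 := by linear_combination -hl
  rw [← hx, ← hy]
  ring

/-- The cokernel of the Laplacian of `I(n, k, l)` is `ℤ[X] / (X ^ n - 1, F)`. -/
noncomputable def cokerLapIEquiv (hk : 1 ≤ k) (hkn : 2 * k < n) (hl : 1 ≤ l) (hln : 2 * l < n) :
    cokerM (lapI n k l ℤ) ≃ₗ[ℤ]
      CyclicRing ℤ n ⧸ Ideal.span {AdjoinRoot.mk (X ^ n - 1) (FpolyI k l)} :=
  have hspan : Ideal.span {lapSymbol n l * lapSymbol n k - 1} =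
      Ideal.span {AdjoinRoot.mk (X ^ n - 1) (FpolyI k l)} := by
    rw [mk_FpolyI, Ideal.span_singleton_mul_left_unit (AddChar.val_isUnit _ _)]
  have hrange : (LinearMap.range (lapI n k l ℤ).mulVecLin).map (vertexEquiv n).toLinearMap =
      (LinearMap.range (coupling (lapSymbol n l) (lapSymbol n k))).restrictScalars ℤ := by
    rw [map_range_of_comp_eq _ (vertexEquiv_comp_lapI hk hkn hl hln),
      LinearMap.range_restrictScalars]
  Submodule.Quotient.equiv _ _ (vertexEquiv n) hrange ≪≫ₗ
    Submodule.Quotient.restrictScalarsEquiv ℤ _ ≪≫ₗ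
    (couplingCokerEquiv _ _ ≪≫ₗ Submodule.quotEquivOfEq _ _ hspan).restrictScalars ℤ

end IGraph

section FpolyI

lemma monic_X_sq_sub_three_mul_X_add_one : (X ^ 2 - 3 * X + 1 : ℤ[X]).Monic := by
  monicity!

lemma natDegree_X_sq_sub_three_mul_X_add_one : (X ^ 2 - 3 * X + 1 : ℤ[X]).natDegree = 2 := by
  compute_degree!

lemma FpolyI_eq_expand_mul_expand_sub (k l : ℕ) :
    FpolyI k l = expand ℤ k (X ^ 2 - 3 * X + 1) * expand ℤ l (X ^ 2 - 3 * X + 1) - X ^ (k + l) := by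
  simp only [FpolyI, map_add, map_sub, map_mul, map_pow, map_one, map_ofNat, expand_X]
  ring

variable {k l : ℕ}

lemma natDegree_expand_mul_expand {R : Type*} [CommRing R] {p : R[X]} (hp : p.Monic)
    (hk : 1 ≤ k) (hl : 1 ≤ l) :
    (expand R k p * expand R l p).natDegree = p.natDegree * (k + l) := by
  rw [(hp.expand hk).natDegree_mul (hp.expand hl), natDegree_expand, natDegree_expand, mul_add]

lemma degree_X_pow_lt_degree_expand_mul_expand (hk : 1 ≤ k) (hl : 1 ≤ l) :
    (X ^ (k + l) : ℤ[X]).degree <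
      (expand ℤ k (X ^ 2 - 3 * X + 1) * expand ℤ l (X ^ 2 - 3 * X + 1)).degree := by
  refine degree_lt_degree ?_
  rw [natDegree_X_pow, natDegree_expand_mul_expand monic_X_sq_sub_three_mul_X_add_one hk hl,
    natDegree_X_sq_sub_three_mul_X_add_one]
  omega

lemma monic_FpolyI (hk : 1 ≤ k) (hl : 1 ≤ l) : (FpolyI k l).Monic := by
  rw [FpolyI_eq_expand_mul_expand_sub]
  exact Monic.sub_of_left ((monic_X_sq_sub_three_mul_X_add_one.expand hk).mul
    (monic_X_sq_sub_three_mul_X_add_one.expand hl))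
    (degree_X_pow_lt_degree_expand_mul_expand hk hl)

lemma natDegree_FpolyI (hk : 1 ≤ k) (hl : 1 ≤ l) : (FpolyI k l).natDegree = 2 * (k + l) := by
  rw [FpolyI_eq_expand_mul_expand_sub,
    natDegree_eq_of_degree_eq
      (degree_sub_eq_left_of_degree_lt (degree_X_pow_lt_degree_expand_mul_expand hk hl)),
    natDegree_expand_mul_expand monic_X_sq_sub_three_mul_X_add_one hk hl,
    natDegree_X_sq_sub_three_mul_X_add_one]

end FpolyI

/-- The cokernel of the Laplacian of the I-graph `I(n,k,l)` is isomorphic as a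
`ℤ`-module to the cokernel of `𝒜^n - I`, where `𝒜` is the companion matrix of
`F(X) = (3X^k - X^{2k} - 1)(3X^l - X^{2l} - 1) - X^{k+l}`. -/
theorem coker_laplacian_IGraph (n k l : ℕ) [NeZero n]
    (hk : 1 ≤ k) (hkl : k ≤ l) (hn : 2 * l < n) :
    Nonempty (cokerM (lapI n k l ℤ) ≃ₗ[ℤ]
      cokerM (companionM (FpolyI k l) (2 * (k + l)) ^ n - 1)) := by
  have hl : 1 ≤ l := hk.trans hkl
  have hpow : aeval (companionM (FpolyI k l) (2 * (k + l))) (X ^ n - 1 : ℤ[X]) =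
      companionM (FpolyI k l) (2 * (k + l)) ^ n - 1 := by
    rw [map_sub, map_pow, aeval_X, map_one]
  rw [← hpow]
  exact ⟨cokerLapIEquiv hk (by omega) hl hn ≪≫ₗ
    (quotQuotSpanSingletonComm ℤ (X ^ n - 1) (FpolyI k l)).toLinearEquiv ≪≫ₗ
    (cokerAevalCompanionEquiv (monic_FpolyI hk hl) (natDegree_FpolyI hk hl) (X ^ n - 1)).symm⟩
end

section
/- Let n, k, l be integers with 1 ≤ k ≤ l, 2l < n and gcd(k,l) = 1. Let Q ∈ ℂ[X] be the polynomial of degree k+l−1 satisfying (X − 1)·Q(X) = (3 − 2T_k(X))(3 − 2T_l(X)) − 1. Then the number τ_{k,l}(n) of spanning trees of the I-graph I(n,k,l) satisfies, in ℂ, τ_{k,l}(n) = (−1)^{(n−1)(k+l)} · n · ∏_{w} (T_n(w) − 1)/(w − 1), where the product is over the multiset of complex roots w of Q counted with multiplicity. -/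
open Polynomial

/-!
By the matrix-tree theorem, a consequence of the Cauchy–Binet formula, the determinant of a rank-one
perturbation of the Laplacian is a known multiple of the number `τ` of spanning trees. The Laplacian
of `I(n,k,l)` is a `2 × 2` block matrix of circulants, which the discrete Fourier transform
diagonalises simultaneously; with `c_j = cos (2πj/n)` this gives
`n τ = ∏_{j ≠ 0} ((3 - 2 T_k(c_j)) (3 - 2 T_l(c_j)) - 1) = ∏_{j ≠ 0} (c_j - 1) Q(c_j)`.
Factoring `Q` over its roots and exchanging the two products, everything reduces to the identity
`∏_{j ≠ 0} (c_j - w) = (-1/2)^(n-1) (T_n(w) - 1) / (w - 1)`, where at `w = 1`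
the derivative `T_n'(1) = n²` takes the place of the quotient.
-/

section CauchyBinet

open Matrix

variable {V E R : Type*} [Fintype V] [DecidableEq V] [CommRing R]

theorem det_sum_vecMulVec_eq_sum_piFinset (F : Finset E) (a b : E → V → R) :
    (∑ e ∈ F, vecMulVec (a e) (b e)).det =
      ∑ r ∈ Fintype.piFinset fun _ : V => F, (∏ i, a (r i) i) * det (of fun i => b (r i)) := by
  classical
  have hrows : ∑ e ∈ F, vecMulVec (a e) (b e) = fun i => ∑ e ∈ F, a e i • b e := by
    ext i j
    simp [Matrix.sum_apply, vecMulVec_apply]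
  rw [hrows]
  change detRowAlternating.toMultilinearMap _ = _
  rw [MultilinearMap.map_sum_finset]
  exact Finset.sum_congr rfl fun r _ => MultilinearMap.map_smul_univ _ _ _

/-- The Cauchy–Binet formula. -/
theorem det_sum_vecMulVec_eq_sum_powersetCard (F : Finset E) (a b : E → V → R) :
    (∑ e ∈ F, vecMulVec (a e) (b e)).det =
      ∑ S ∈ F.powersetCard (Fintype.card V), (∑ e ∈ S, vecMulVec (a e) (b e)).det := by
  classical
  simp_rw [det_sum_vecMulVec_eq_sum_piFinset]
  set term : (V → E) → R := fun r => (∏ i, a (r i) i) * det (of fun i => b (r i))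
  have term_eq_zero {r : V → E} (hr : ¬ r.Injective) : term r = 0 := by
    obtain ⟨i, j, hij, hne⟩ := Function.not_injective_iff.1 hr
    have hdet : det (of fun i => b (r i)) = 0 :=
      det_zero_of_row_eq hne (congrArg b hij)
    simp only [term, hdet, mul_zero]
  have sum_piFinset {S : Finset E} (hS : S ∈ F.powersetCard (Fintype.card V)) :
      ∑ r ∈ Fintype.piFinset (fun _ : V => S), term r =
        ∑ r ∈ Fintype.piFinset (fun _ : V => F),
          if Finset.univ.image r ⊆ S then term r else 0 := by
    rw [← Finset.sum_filter]
    refine Finset.sum_congr (Finset.ext fun r => ?_) fun _ _ => rfl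
    have hSF := (Finset.mem_powersetCard.1 hS).1
    simp only [Fintype.mem_piFinset, Finset.mem_filter, Finset.image_subset_iff, Finset.mem_univ,
      true_imp_iff]
    exact ⟨fun h => ⟨fun i => hSF (h i), h⟩, fun h => h.2⟩
  rw [Finset.sum_congr rfl fun S hS => sum_piFinset hS, Finset.sum_comm]
  refine Finset.sum_congr rfl fun r hr => ?_
  by_cases hinj : r.Injective
  · have hcard : (Finset.univ.image r).card = Fintype.card V := by
      rw [Finset.card_image_of_injective _ hinj, Finset.card_univ]
    have hmem : Finset.univ.image r ∈ F.powersetCard (Fintype.card V) :=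
      Finset.mem_powersetCard.2 ⟨by simpa [Finset.image_subset_iff] using hr, hcard⟩
    rw [Finset.sum_eq_single_of_mem _ hmem, if_pos subset_rfl]
    intro S hS hne
    refine if_neg fun hsub => hne (Finset.eq_of_subset_of_card_le hsub ?_).symm
    rw [(Finset.mem_powersetCard.1 hS).2, hcard]
  · simp [term_eq_zero hinj]

theorem det_sum_vecMulVec_self_of_equiv (S : Finset E) (a : E → V → R) (g : V ≃ S) :
    (∑ e ∈ S, vecMulVec (a e) (a e)).det = (of fun i : V => a (g i)).det ^ 2 := by
  have hgram : ∑ e ∈ S, vecMulVec (a e) (a e) =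
      (of fun i : V => a (g i))ᵀ * of fun i : V => a (g i) := by
    ext i j
    rw [← Finset.sum_coe_sort, ← g.sum_comp]
    simp [Matrix.sum_apply, vecMulVec_apply, Matrix.mul_apply]
  rw [hgram, det_mul, det_transpose, sq]

theorem det_sum_vecMulVec_eq_one_of_span_eq_top (S : Finset E) (a : E → V → ℤ)
    (hcard : S.card = Fintype.card V) (hspan : Submodule.span ℤ (a '' S) = ⊤) :
    (∑ e ∈ S, vecMulVec (a e) (a e)).det = 1 := by
  have g : V ≃ S := Fintype.equivOfCardEq (by simp [hcard])
  have hrange : Set.range (of fun i : V => a (g i)).row = a '' S := by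
    change Set.range ((a ∘ Subtype.val) ∘ g) = a '' S
    rw [g.surjective.range_comp, Set.range_comp, Subtype.range_coe]
  have hsurj : Function.Surjective (of fun i : V => a (g i)).vecMul := by
    rw [← coe_vecMulLinear, ← LinearMap.range_eq_top, range_vecMulLinear, hrange, hspan]
  have hunit : IsUnit (of fun i : V => a (g i)).det :=
    (isUnit_iff_isUnit_det _).1 (vecMul_surjective_iff_isUnit.1 hsurj)
  rw [det_sum_vecMulVec_self_of_equiv S a g, Int.isUnit_sq hunit]

theorem det_sum_vecMulVec_eq_zero_of_dotProduct_eq_zero [IsDomain R] (S : Finset E)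
    (a b : E → V → R) {x : V → R} (hx : x ≠ 0) (hb : ∀ e ∈ S, b e ⬝ᵥ x = 0) :
    (∑ e ∈ S, vecMulVec (a e) (b e)).det = 0 := by
  refine exists_mulVec_eq_zero_iff.1 ⟨x, hx, ?_⟩
  rw [sum_mulVec]
  refine Finset.sum_eq_zero fun e he => ?_
  rw [vecMulVec_mulVec, hb e he, MulOpposite.op_zero, zero_smul]

end CauchyBinet

section SpanningTrees

open SimpleGraph

variable {V : Type*}

/-- The number of spanning trees of a graph. -/
noncomputable def numSpanningTrees (G : SimpleGraph V) : ℕ :=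
  Nat.card {H : G.Subgraph // H.IsSpanning ∧ H.coe.IsTree}

theorem numSpanningTrees_eq_card_isTree (G : SimpleGraph V) :
    numSpanningTrees G = Nat.card {H : SimpleGraph V // H ≤ G ∧ H.IsTree} := by
  refine Nat.card_congr
    { toFun := fun H => ⟨H.1.spanningCoe, H.1.spanningCoe_le,
        (H.1.spanningCoeEquivCoeOfSpanning H.2.1).isTree_iff.2 H.2.2⟩
      invFun := fun H => ⟨toSubgraph H.1 H.2.1, toSubgraph.isSpanning _ _,
        ((toSubgraph H.1 H.2.1).spanningCoeEquivCoeOfSpanning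
          (toSubgraph.isSpanning _ _)).isTree_iff.1 H.2.2⟩
      left_inv := ?_
      right_inv := fun _ => rfl }
  rintro ⟨H, hspanning, -⟩
  exact Subtype.ext (Subgraph.ext (Set.eq_univ_of_forall hspanning).symm rfl)

end SpanningTrees

section MatrixTree

open Matrix SimpleGraph

variable {V : Type*} [DecidableEq V]

/-- The column at `e` of an oriented incidence matrix: the difference of the unit vectors at the
two ends of `e`, the orientation being an arbitrary choice of representative of `e`. -/
noncomputable def orientedIncVec (e : Sym2 V) : V → ℤ :=
  Pi.single (Quot.out e).1 1 - Pi.single (Quot.out e).2 1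

theorem orientedIncVec_mk (u v : V) :
    orientedIncVec s(u, v) = Pi.single u 1 - Pi.single v 1 ∨
      orientedIncVec s(u, v) = -(Pi.single u 1 - Pi.single v 1) := by
  have hout : s((Quot.out s(u, v)).1, (Quot.out s(u, v)).2) = s(u, v) := Quot.out_eq s(u, v)
  unfold orientedIncVec
  obtain ⟨h₁, h₂⟩ | ⟨h₁, h₂⟩ := Sym2.eq_iff.1 hout <;> rw [h₁, h₂]
  · exact Or.inl rfl
  · exact Or.inr (neg_sub _ _).symm

theorem orientedIncVec_dotProduct_eq_zero [Fintype V] {x : V → ℤ} {u v : V} (h : x u = x v) :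
    orientedIncVec s(u, v) ⬝ᵥ x = 0 := by
  obtain huv | huv := orientedIncVec_mk u v <;> simp [huv, sub_dotProduct, h]

theorem orientedIncVec_mul_orientedIncVec (G : SimpleGraph V) [DecidableRel G.Adj] {e : Sym2 V}
    (he : e ∈ G.edgeSet) (i j : V) :
    orientedIncVec e i * orientedIncVec e j =
      (if i = j then 1 else -1) * (G.incMatrix ℤ i e * G.incMatrix ℤ j e) := by
  induction e with | _ u v => ?_
  have huv : G.Adj u v := he
  have hne : u ≠ v := huv.ne
  have hsign : orientedIncVec s(u, v) i * orientedIncVec s(u, v) j =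
      (Pi.single u 1 - Pi.single v 1 : V → ℤ) i * (Pi.single u 1 - Pi.single v 1 : V → ℤ) j := by
    obtain h | h := orientedIncVec_mk u v <;> rw [h]
    exact neg_mul_neg _ _
  simp only [hsign, incMatrix_apply', mk'_mem_incidenceSet_iff, huv, true_and, Pi.sub_apply,
    Pi.single_apply]
  grind

theorem sum_vecMulVec_orientedIncVec [Fintype V] (G : SimpleGraph V) [DecidableRel G.Adj] :
    ∑ e ∈ G.edgeFinset, vecMulVec (orientedIncVec e) (orientedIncVec e) = G.lapMatrix ℤ := by
  ext i j
  have hinc : ∑ e ∈ G.edgeFinset, G.incMatrix ℤ i e * G.incMatrix ℤ j e =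
      if i = j then (G.degree i : ℤ) else if G.Adj i j then 1 else 0 := by
    have h := congrFun₂ (G.incMatrix_mul_transpose (R := ℤ)) i j
    simp only [mul_apply, transpose_apply, of_apply] at h
    rw [← h]
    refine Finset.sum_subset (Finset.subset_univ _) fun e _ he => ?_
    rw [G.incMatrix_of_notMem_incidenceSet fun hi => he (mem_edgeFinset.2 hi.1), zero_mul]
  simp only [Matrix.sum_apply, vecMulVec_apply]
  rw [Finset.sum_congr rfl fun e he =>
    orientedIncVec_mul_orientedIncVec G (mem_edgeFinset.1 he) i j, ← Finset.mul_sum, hinc]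
  by_cases hij : i = j
  · subst hij
    simp [lapMatrix, degMatrix]
  · by_cases hadj : G.Adj i j <;> simp [lapMatrix, degMatrix, hij, hadj]

/-- The columns of an oriented incidence matrix, indexed by `some e`, together with the unit vector
at the root `r`, indexed by `none`. -/
noncomputable def rootedIncVec (r : V) : Option (Sym2 V) → V → ℤ
  | none => Pi.single r 1
  | some e => orientedIncVec e

theorem span_rootedIncVec_eq_top [Finite V] {H : SimpleGraph V} (hH : H.Connected) (r : V) :
    Submodule.span ℤ (rootedIncVec r '' {o | ∀ e ∈ o, e ∈ H.edgeSet}) = ⊤ := by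
  have := Fintype.ofFinite V
  set W := Submodule.span ℤ (rootedIncVec r '' {o | ∀ e ∈ o, e ∈ H.edgeSet})
  have root_mem : (Pi.single r 1 : V → ℤ) ∈ W :=
    Submodule.subset_span ⟨none, by simp, rfl⟩
  have edge_mem {u v : V} (huv : H.Adj u v) : (Pi.single u 1 - Pi.single v 1 : V → ℤ) ∈ W := by
    have he : orientedIncVec s(u, v) ∈ W :=
      Submodule.subset_span ⟨some s(u, v), by simpa using huv, rfl⟩
    obtain h | h := orientedIncVec_mk u v
    · rwa [h] at he
    · rwa [h, neg_mem_iff] at he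
  have single_mem (v : V) : (Pi.single v 1 : V → ℤ) ∈ W := by
    obtain ⟨p⟩ := hH.preconnected v r
    clear_value W
    induction p with
    | nil => exact root_mem
    | cons huv _ ih => simpa using W.add_mem (edge_mem huv) (ih root_mem)
  refine eq_top_iff.2 fun x _ => ?_
  rw [← Finset.univ_sum_single x]
  refine W.sum_mem fun v _ => ?_
  simpa [← Pi.single_smul] using W.smul_mem (x v) (single_mem v)

variable [Fintype V]

theorem none_mem_of_det_ne_zero {r : V} {S : Finset (Option (Sym2 V))}
    (hdet : (∑ o ∈ S, vecMulVec (rootedIncVec r o) (rootedIncVec r o)).det ≠ 0) :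
    none ∈ S := by
  contrapose! hdet with hnone
  refine det_sum_vecMulVec_eq_zero_of_dotProduct_eq_zero S _ _ (x := fun _ => 1)
    (fun h => one_ne_zero (congrFun h r)) ?_
  rintro (_ | ⟨u, v⟩) ho
  · exact absurd ho hnone
  · exact orientedIncVec_dotProduct_eq_zero rfl

theorem connected_of_det_ne_zero {H : SimpleGraph V} {r : V} {S : Finset (Option (Sym2 V))}
    (hS : ∀ e, some e ∈ S → e ∈ H.edgeSet)
    (hdet : (∑ o ∈ S, vecMulVec (rootedIncVec r o) (rootedIncVec r o)).det ≠ 0) :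
    H.Connected := by
  classical
  contrapose! hdet with hH
  obtain ⟨v, hv⟩ : ∃ v, ¬ H.Reachable r v := by
    by_contra! h
    exact hH ((connected_iff_exists_forall_reachable H).2 ⟨r, h⟩)
  -- The indicator of the vertices unreachable from `r` is orthogonal to all the columns.
  refine det_sum_vecMulVec_eq_zero_of_dotProduct_eq_zero S _ _
    (x := fun u => if H.Reachable r u then 0 else 1)
    (fun h => by simpa [hv] using congrFun h v) ?_
  rintro (_ | ⟨a, b⟩) ho
  · simp [rootedIncVec]
  · have hab : H.Adj a b := hS _ ho
    have hiff : H.Reachable r a ↔ H.Reachable r b :=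
      ⟨fun h => h.trans hab.reachable, fun h => h.trans hab.symm.reachable⟩
    exact orientedIncVec_dotProduct_eq_zero (by simp only [hiff])

theorem exists_isTree_of_det_ne_zero (G : SimpleGraph V) [DecidableRel G.Adj] {r : V}
    {S : Finset (Option (Sym2 V))}
    (hS : S ∈ G.edgeFinset.insertNone.powersetCard (Fintype.card V))
    (hdet : (∑ o ∈ S, vecMulVec (rootedIncVec r o) (rootedIncVec r o)).det ≠ 0) :
    ∃ H ≤ G, H.IsTree ∧ ∀ o, o ∈ S ↔ ∀ e ∈ o, e ∈ H.edgeSet := by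
  classical
  obtain ⟨hSG, hcard⟩ := Finset.mem_powersetCard.1 hS
  have hnone : none ∈ S := none_mem_of_det_ne_zero hdet
  have edge_of_mem {e : Sym2 V} (he : some e ∈ S) : e ∈ G.edgeSet :=
    mem_edgeFinset.1 (Finset.some_mem_insertNone.1 (hSG he))
  obtain ⟨H, hH⟩ : ∃ H : SimpleGraph V, ∀ e, e ∈ H.edgeSet ↔ some e ∈ S := by
    refine ⟨fromEdgeSet {e | some e ∈ S}, fun e => ?_⟩
    rw [edgeSet_fromEdgeSet]
    exact ⟨fun h => h.1, fun h => ⟨h, G.not_isDiag_of_mem_edgeSet (edge_of_mem h)⟩⟩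
  have mem_iff (o : Option (Sym2 V)) : o ∈ S ↔ ∀ e ∈ o, e ∈ H.edgeSet := by
    cases o <;> simp [hnone, hH]
  have hHS : H.edgeFinset.insertNone = S := by
    ext o
    rw [mem_iff, Finset.mem_insertNone]
    simp only [mem_edgeFinset]
  refine ⟨H, edgeSet_subset_edgeSet.1 fun e he => edge_of_mem ((hH e).1 he),
    isTree_iff_connected_and_card.2 ⟨connected_of_det_ne_zero (fun e => (hH e).2) hdet, ?_⟩,
    mem_iff⟩
  rw [Nat.card_eq_fintype_card, Nat.card_eq_fintype_card, ← edgeFinset_card,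
    ← Finset.card_insertNone, hHS, hcard]

theorem det_sum_vecMulVec_rootedIncVec_of_isTree {H : SimpleGraph V} [Fintype H.edgeSet]
    (hH : H.IsTree) (r : V) :
    (∑ o ∈ H.edgeFinset.insertNone, vecMulVec (rootedIncVec r o) (rootedIncVec r o)).det = 1 := by
  refine det_sum_vecMulVec_eq_one_of_span_eq_top _ _ ?_ ?_
  · rw [Finset.card_insertNone, hH.card_edgeFinset]
  · convert span_rootedIncVec_eq_top hH.connected r using 3
    ext o
    simp [Finset.mem_insertNone]

theorem det_lapMatrix_int_add_vecMulVec_single (G : SimpleGraph V)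
    [DecidableRel G.Adj] (r : V) :
    (G.lapMatrix ℤ + vecMulVec (Pi.single r 1) (Pi.single r 1)).det =
      (numSpanningTrees G : ℤ) := by
  classical
  have hsum : G.lapMatrix ℤ + vecMulVec (Pi.single r 1) (Pi.single r 1) =
      ∑ o ∈ G.edgeFinset.insertNone, vecMulVec (rootedIncVec r o) (rootedIncVec r o) := by
    rw [Finset.sum_insertNone, ← sum_vecMulVec_orientedIncVec, add_comm]
    rfl
  rw [hsum, det_sum_vecMulVec_eq_sum_powersetCard, numSpanningTrees_eq_card_isTree,
    Nat.card_eq_fintype_card, Fintype.card_subtype, Finset.card_eq_sum_ones, Nat.cast_sum]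
  refine (Finset.sum_of_injOn (fun H => H.edgeFinset.insertNone)
    (fun H _ H' _ h => edgeFinset_inj.1 (Finset.insertNone.injective h)) ?_ ?_ ?_).symm
  · intro H hH
    obtain ⟨hHG, hTree⟩ := (Finset.mem_filter.1 hH).2
    refine Finset.mem_powersetCard.2 ⟨Finset.insertNone.monotone (edgeFinset_mono hHG), ?_⟩
    rw [Finset.card_insertNone, hTree.card_edgeFinset]
  · intro S hS hnotTree
    by_contra hdet
    obtain ⟨H, hHG, hTree, hHS⟩ := exists_isTree_of_det_ne_zero G hS hdet
    refine hnotTree ⟨H, by simp [hHG, hTree], Finset.ext fun o => ?_⟩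
    simp only [hHS, Finset.mem_insertNone, mem_edgeFinset]
  · intro H hH
    rw [det_sum_vecMulVec_rootedIncVec_of_isTree (Finset.mem_filter.1 hH).2.2, Nat.cast_one]

variable {R : Type*} [CommRing R]

theorem lapMatrix_int_map (G : SimpleGraph V) [DecidableRel G.Adj] :
    (G.lapMatrix ℤ).map (Int.cast : ℤ → R) = G.lapMatrix R := by
  ext i j
  by_cases hij : i = j <;> simp [lapMatrix, degMatrix, hij]

theorem det_lapMatrix_add_vecMulVec_single (G : SimpleGraph V) [DecidableRel G.Adj] (r : V) :
    (G.lapMatrix R + vecMulVec (Pi.single r 1) (Pi.single r 1)).det =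
      (numSpanningTrees G : R) := by
  have hmap : G.lapMatrix R + vecMulVec (Pi.single r 1) (Pi.single r 1) =
      (Int.castRingHom R).mapMatrix
        (G.lapMatrix ℤ + vecMulVec (Pi.single r 1) (Pi.single r 1)) := by
    rw [map_add]
    congr 1
    · exact (lapMatrix_int_map G).symm
    · ext i j
      simp [vecMulVec_apply, Pi.single_apply]
  rw [hmap, ← RingHom.map_det, det_lapMatrix_int_add_vecMulVec_single, map_natCast]

/-- A form of **Kirchhoff's matrix-tree theorem**. -/
theorem det_lapMatrix_add_vecMulVec [Nonempty V] (G : SimpleGraph V)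
    [DecidableRel G.Adj] (u v : V → R) :
    (G.lapMatrix R + vecMulVec u v).det = (∑ i, u i) * (∑ i, v i) * (numSpanningTrees G : R) := by
  obtain ⟨r⟩ := ‹Nonempty V›
  -- `C w` sends the unit vector at `r` to `w` and fixes every vector with coordinate sum zero.
  set C : (V → R) → Matrix V V R := fun w => 1 + vecMulVec (w - Pi.single r 1) 1
  have det_C (w : V → R) : (C w).det = ∑ i, w i := by
    simp only [C]
    rw [vecMulVec_eq Unit, det_one_add_replicateCol_mul_replicateRow]
    simp [dotProduct_sub, one_dotProduct]
  have C_mulVec_single (w : V → R) : C w *ᵥ Pi.single r 1 = w := by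
    rw [add_mulVec, one_mulVec, vecMulVec_mulVec]
    simp
  have C_mul_lapMatrix (w : V → R) : C w * G.lapMatrix R = G.lapMatrix R := by
    have hsum : 1 ᵥ* G.lapMatrix R = 0 := by
      rw [← isSymm_lapMatrix, vecMul_transpose]
      exact G.lapMatrix_mulVec_const_eq_zero
    rw [add_mul, one_mul, vecMulVec_mul, hsum, vecMulVec_zero, add_zero]
  have lapMatrix_mul_C (w : V → R) : G.lapMatrix R * (C w)ᵀ = G.lapMatrix R := by
    simpa [(isSymm_lapMatrix R G).eq] using congrArg transpose (C_mul_lapMatrix w)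
  have hfactor : G.lapMatrix R + vecMulVec u v =
      C u * (G.lapMatrix R + vecMulVec (Pi.single r 1) (Pi.single r 1)) * (C v)ᵀ := by
    rw [mul_add, add_mul, C_mul_lapMatrix, lapMatrix_mul_C, mul_vecMulVec, vecMulVec_mul,
      vecMul_transpose, C_mulVec_single, C_mulVec_single]
  rw [hfactor, det_mul, det_mul, det_transpose, det_C, det_C, det_lapMatrix_add_vecMulVec_single]
  ring

end MatrixTree

section BlockCirculant

open Matrix ZMod

theorem det_fromBlocks_diagonal {ι R : Type*} [Fintype ι] [DecidableEq ι] [CommRing R]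
    (a b c d : ι → R) :
    (fromBlocks (diagonal a) (diagonal b) (diagonal c) (diagonal d)).det =
      ∏ i, (a i * d i - b i * c i) := by
  let σ : Fin 2 × ι ≃ ι ⊕ ι :=
    (finTwoEquiv.prodCongr (Equiv.refl ι)).trans (Equiv.boolProdEquivSum ι)
  have hblock : (fromBlocks (diagonal a) (diagonal b) (diagonal c) (diagonal d)).submatrix σ σ =
      blockDiagonal fun i => !![a i, b i; c i, d i] := by
    ext ⟨s, i⟩ ⟨t, j⟩
    by_cases hij : i = j <;> fin_cases s <;> fin_cases t <;>
      simp [σ, blockDiagonal_apply, Equiv.boolProdEquivSum, finTwoEquiv, hij]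
  rw [← det_submatrix_equiv_self σ, hblock, det_blockDiagonal]
  simp only [det_fin_two_of]

/-- The matrix of the discrete Fourier transform on `ZMod n`. -/
noncomputable def fourierMatrix (n : ℕ) [NeZero n] : Matrix (ZMod n) (ZMod n) ℂ :=
  of fun i j => stdAddChar (-(i * j))

variable {n : ℕ} [NeZero n]

theorem dft_single (a j : ZMod n) : 𝓕 (Pi.single a 1 : ZMod n → ℂ) j = stdAddChar (-(a * j)) := by
  simp [dft_apply, Pi.single_apply]

theorem dft_one (j : ZMod n) : 𝓕 (1 : ZMod n → ℂ) j = if j = 0 then (n : ℂ) else 0 := by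
  have hsum := AddChar.sum_mulShift (-j) (isPrimitive_stdAddChar n)
  simpa [dft_apply] using hsum

theorem fourierMatrix_mulVec (f : ZMod n → ℂ) : fourierMatrix n *ᵥ f = 𝓕 f := by
  ext i
  simp [fourierMatrix, mulVec, dotProduct, dft_apply, mul_comm i]

theorem det_fourierMatrix_ne_zero : (fourierMatrix n).det ≠ 0 := by
  intro hdet
  obtain ⟨f, hf, hFf⟩ := exists_mulVec_eq_zero_iff.2 hdet
  rw [fourierMatrix_mulVec] at hFf
  exact hf (dft.map_eq_zero_iff.1 hFf)

theorem fourierMatrix_mul_circulant (f : ZMod n → ℂ) :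
    fourierMatrix n * circulant f = diagonal (𝓕 f) * fourierMatrix n := by
  ext i j
  rw [diagonal_mul, mul_apply, dft_apply, Finset.sum_mul, ← Equiv.sum_comp (Equiv.addRight j)]
  refine Finset.sum_congr rfl fun m _ => ?_
  simp only [fourierMatrix, of_apply, circulant_apply, Equiv.coe_addRight, add_sub_cancel_right,
    smul_eq_mul]
  rw [mul_right_comm, ← AddChar.map_add_eq_mul]
  ring_nf

theorem det_fromBlocks_circulant (a b c d : ZMod n → ℂ) :
    (fromBlocks (circulant a) (circulant b) (circulant c) (circulant d)).det =
      ∏ j, (𝓕 a j * 𝓕 d j - 𝓕 b j * 𝓕 c j) := by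
  have hF : (fromBlocks (fourierMatrix n) 0 0 (fourierMatrix n)).det ≠ 0 := by
    rw [det_fromBlocks_zero₂₁]
    exact mul_ne_zero det_fourierMatrix_ne_zero det_fourierMatrix_ne_zero
  rw [← det_fromBlocks_diagonal]
  refine mul_left_cancel₀ hF ?_
  rw [mul_comm _ (det (fromBlocks (diagonal _) _ _ _)), ← det_mul, ← det_mul,
    fromBlocks_multiply, fromBlocks_multiply]
  simp [fourierMatrix_mul_circulant]

end BlockCirculant

section Cosines

open ZMod Polynomial.Chebyshev

theorem two_mul_eval_T_add_div_two {K : Type*} [Field K] [NeZero (2 : K)] {x y : K}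
    (hxy : x * y = 1) (m : ℕ) : 2 * (T K m).eval ((x + y) / 2) = x ^ m + y ^ m := by
  rw [← dickson_one_one_eval_add_inv x y hxy, dickson_one_one_eq_chebyshev_C]
  have hcomp := congrArg (eval ((x + y) / 2)) (C_comp_two_mul_X K m)
  rw [eval_comp, eval_mul, eval_mul, eval_X, eval_ofNat, mul_div_cancel₀ _ two_ne_zero] at hcomp
  exact hcomp.symm

theorem exists_add_inv_div_two_eq (w : ℂ) : ∃ z : ℂ, z ≠ 0 ∧ (z + z⁻¹) / 2 = w := by
  obtain ⟨θ, rfl⟩ := Complex.cos_surjective w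
  refine ⟨Complex.exp (θ * Complex.I), Complex.exp_ne_zero _, ?_⟩
  rw [← Complex.exp_neg, Complex.cos, neg_mul]

variable {n : ℕ} [NeZero n]

/-- The number `cos (2πj/n)` for a residue class `j`, as a complex number. -/
noncomputable def cosZMod (j : ZMod n) : ℂ :=
  (stdAddChar j + stdAddChar (-j)) / 2

theorem cosZMod_zero : cosZMod (0 : ZMod n) = 1 := by
  simp [cosZMod]

theorem stdAddChar_mul_stdAddChar_neg (j : ZMod n) :
    (stdAddChar j * stdAddChar (-j) : ℂ) = 1 := by
  rw [← AddChar.map_add_eq_mul, add_neg_cancel, AddChar.map_zero_eq_one]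

theorem two_mul_eval_T_cosZMod (m : ℕ) (j : ZMod n) :
    2 * (T ℂ m).eval (cosZMod j) =
      stdAddChar ((m : ZMod n) * j) + stdAddChar (-((m : ZMod n) * j)) := by
  rw [cosZMod, two_mul_eval_T_add_div_two (stdAddChar_mul_stdAddChar_neg j), ← mul_neg,
    ← nsmul_eq_mul, ← nsmul_eq_mul, AddChar.map_nsmul_eq_pow, AddChar.map_nsmul_eq_pow]

theorem nthRootsFinset_eq_image_stdAddChar :
    nthRootsFinset n (1 : ℂ) = Finset.univ.image (stdAddChar : ZMod n → ℂ) := by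
  symm
  refine Finset.eq_of_subset_of_card_le (Finset.image_subset_iff.2 fun j _ => ?_) ?_
  · rw [mem_nthRootsFinset (NeZero.pos n), ← AddChar.map_nsmul_eq_pow]
    simp
  · rw [Finset.card_image_of_injective _ injective_stdAddChar, Finset.card_univ, ZMod.card,
      (Complex.isPrimitiveRoot_exp n (NeZero.ne n)).card_nthRootsFinset]

theorem prod_sub_stdAddChar (z : ℂ) : ∏ j : ZMod n, (z - stdAddChar j) = z ^ n - 1 := by
  have hprod := (Complex.isPrimitiveRoot_exp n (NeZero.ne n)).pow_sub_pow_eq_prod_sub_mul z 1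
    (NeZero.pos n)
  rw [nthRootsFinset_eq_image_stdAddChar, Finset.prod_image injective_stdAddChar.injOn] at hprod
  simpa using hprod.symm

theorem prod_cosZMod_sub (w : ℂ) :
    ∏ j : ZMod n, (cosZMod j - w) = (-1 / 2) ^ n * (2 * (T ℂ n).eval w - 2) := by
  obtain ⟨z, hz, rfl⟩ := exists_add_inv_div_two_eq w
  have hfactor (j : ZMod n) : cosZMod j - (z + z⁻¹) / 2 =
      -1 / 2 * (z⁻¹ * ((z - stdAddChar j) * (z - stdAddChar (-j)))) := by
    rw [cosZMod]
    field_simp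
    linear_combination stdAddChar_mul_stdAddChar_neg j
  have hneg : ∏ j : ZMod n, (z - stdAddChar (-j)) = z ^ n - 1 := by
    rw [← prod_sub_stdAddChar z]
    exact Equiv.prod_comp (Equiv.neg (ZMod n)) fun j => z - stdAddChar j
  simp only [hfactor, Finset.prod_mul_distrib, hneg, prod_sub_stdAddChar, Finset.prod_const,
    Finset.card_univ, ZMod.card, two_mul_eval_T_add_div_two (mul_inv_cancel₀ hz)]
  have hpow : z ^ n * z⁻¹ ^ n = 1 := by rw [← mul_pow, mul_inv_cancel₀ hz, one_pow]
  linear_combination (-1 / 2) ^ n * (z ^ n - 2) * hpow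

theorem sub_one_mul_prod_erase_cosZMod_sub (w : ℂ) :
    (w - 1) * ∏ j ∈ Finset.univ.erase (0 : ZMod n), (cosZMod j - w) =
      (-1 / 2) ^ (n - 1) * ((T ℂ n).eval w - 1) := by
  have hprod := prod_cosZMod_sub (n := n) w
  rw [← Finset.mul_prod_erase _ _ (Finset.mem_univ 0), cosZMod_zero,
    ← pow_sub_one_mul (NeZero.ne n)] at hprod
  linear_combination -hprod

theorem prod_erase_cosZMod_sub {w : ℂ} (hw : w ≠ 1) :
    ∏ j ∈ Finset.univ.erase (0 : ZMod n), (cosZMod j - w) =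
      (-1 / 2) ^ (n - 1) * (((T ℂ n).eval w - 1) / (w - 1)) := by
  rw [← mul_div_assoc, eq_div_iff (sub_ne_zero.2 hw), mul_comm,
    sub_one_mul_prod_erase_cosZMod_sub]

theorem prod_erase_cosZMod_sub_one :
    ∏ j ∈ Finset.univ.erase (0 : ZMod n), (cosZMod j - 1) = (-1 / 2) ^ (n - 1) * (n : ℂ) ^ 2 := by
  have hpoly : (X - 1) * ∏ j ∈ Finset.univ.erase (0 : ZMod n), (C (cosZMod j) - X) =
      C ((-1 / 2) ^ (n - 1)) * (T ℂ n - 1) := by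
    refine Polynomial.funext fun w => ?_
    simpa [eval_prod] using sub_one_mul_prod_erase_cosZMod_sub w
  have hderiv := congrArg (fun p => eval 1 (derivative p)) hpoly
  simpa [derivative_mul, eval_prod, derivative_T_eval_one, -map_pow] using hderiv

theorem prod_erase_eval_cosZMod {P : ℂ[X]} (hP : P.eval 1 ≠ 0) :
    ∏ j ∈ Finset.univ.erase (0 : ZMod n), P.eval (cosZMod j) =
      P.leadingCoeff ^ (n - 1) * ((-1 / 2) ^ (n - 1)) ^ P.natDegree *
        (P.roots.map fun w => ((T ℂ n).eval w - 1) / (w - 1)).prod := by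
  have hcard : (Finset.univ.erase (0 : ZMod n)).card = n - 1 := by
    rw [Finset.card_erase_of_mem (Finset.mem_univ _), Finset.card_univ, ZMod.card]
  have hroot (w : ℂ) (hw : w ∈ P.roots) : ∏ j ∈ Finset.univ.erase (0 : ZMod n), (cosZMod j - w) =
      (-1 / 2) ^ (n - 1) * (((T ℂ n).eval w - 1) / (w - 1)) := by
    refine prod_erase_cosZMod_sub ?_
    rintro rfl
    exact hP (isRoot_of_mem_roots hw)
  simp_rw [(IsAlgClosed.splits P).eval_eq_prod_roots]
  rw [Finset.prod_mul_distrib, Finset.prod_const, hcard, ← Multiset.prod_map_prod,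
    Multiset.map_congr rfl hroot, Multiset.prod_map_mul, Multiset.map_const',
    Multiset.prod_replicate, IsAlgClosed.card_roots_eq_natDegree, mul_assoc]

end Cosines

section StepVector

open ZMod Polynomial.Chebyshev

variable {n : ℕ}

/-- The indicator of `{m, -m}` (with multiplicity when the two coincide), generating the circulant
adjacency matrix of the cycles `i ~ i ± m` on `ZMod n`. -/
def stepVec (n m : ℕ) : ZMod n → ℂ :=
  Pi.single (m : ZMod n) 1 + Pi.single (-(m : ZMod n)) 1

theorem stepVec_sub {m : ℕ} (hm : ¬ n ∣ 2 * m) (i j : ZMod n) :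
    stepVec n m (i - j) = if i ≠ j ∧ (j = i + m ∨ i = j + m) then 1 else 0 := by
  have htwo : 2 * (m : ZMod n) ≠ 0 := by
    rwa [← Nat.cast_ofNat, ← Nat.cast_mul, Ne, natCast_eq_zero_iff]
  have hpos : i - j = m ↔ i = j + m := sub_eq_iff_eq_add'
  have hneg : i - j = -m ↔ j = i + m := by grind
  simp only [stepVec, Pi.add_apply, Pi.single_apply, hpos, hneg]
  grind

variable [NeZero n]

theorem sum_stepVec (m : ℕ) : ∑ x, stepVec n m x = 2 := by
  simp only [stepVec, Pi.add_apply, Finset.sum_add_distrib, Fintype.sum_pi_single']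
  norm_num

theorem dft_stepVec (m : ℕ) (j : ZMod n) :
    𝓕 (stepVec n m) j = 2 * (T ℂ m).eval (cosZMod j) := by
  rw [two_mul_eval_T_cosZMod, stepVec, map_add, Pi.add_apply, dft_single, dft_single, neg_mul,
    neg_neg, add_comm]

end StepVector

section Laplacian

open Matrix SimpleGraph ZMod Polynomial.Chebyshev

variable {n k l : ℕ}

theorem adjMatrix_IGraph (hk : ¬ n ∣ 2 * k) (hl : ¬ n ∣ 2 * l) :
    (IGraph n k l).adjMatrix ℂ =
      fromBlocks (circulant (stepVec n l)) 1 1 (circulant (stepVec n k)) := by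
  ext (i | i) (j | j) <;> rw [adjMatrix_apply]
  · simp [stepVec_sub hl, IGraph, IRel]
  · simp [IGraph, IRel, Matrix.one_apply]
  · simp [IGraph, IRel, Matrix.one_apply, eq_comm]
  · simp [stepVec_sub hk, IGraph, IRel]

variable [NeZero n]

theorem degree_IGraph (hk : ¬ n ∣ 2 * k) (hl : ¬ n ∣ 2 * l) (v : ZMod n ⊕ ZMod n) :
    (IGraph n k l).degree v = 3 := by
  have sum_circulant (m : ℕ) (i : ZMod n) : ∑ j, stepVec n m (i - j) = 2 :=
    (Equiv.sum_comp (Equiv.subLeft i) (stepVec n m)).trans (sum_stepVec m)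
  have hdeg : ((IGraph n k l).degree v : ℂ) = ∑ w, (IGraph n k l).adjMatrix ℂ v w := by
    simp [degree_eq_sum_if_adj, adjMatrix_apply]
  rw [← Nat.cast_inj (R := ℂ), hdeg, adjMatrix_IGraph hk hl, Fintype.sum_sum_type]
  obtain i | i := v <;> simp [sum_circulant, Matrix.one_apply] <;> norm_num

theorem lapMatrix_IGraph (hk : ¬ n ∣ 2 * k) (hl : ¬ n ∣ 2 * l) :
    (IGraph n k l).lapMatrix ℂ =
      fromBlocks (circulant ((3 : ℂ) • Pi.single 0 1 - stepVec n l)) (circulant (-Pi.single 0 1))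
        (circulant (-Pi.single 0 1)) (circulant ((3 : ℂ) • Pi.single 0 1 - stepVec n k)) := by
  have hdeg : (IGraph n k l).degMatrix ℂ = (3 : ℂ) • 1 := by
    simp only [degMatrix, degree_IGraph hk hl, Nat.cast_ofNat, smul_one_eq_diagonal]
  rw [lapMatrix, hdeg, adjMatrix_IGraph hk hl, ← fromBlocks_one, fromBlocks_smul, sub_eq_add_neg,
    fromBlocks_neg, fromBlocks_add, circulant_sub, circulant_sub, circulant_smul, circulant_neg,
    circulant_single_one]
  simp only [smul_zero, zero_add, sub_eq_add_neg]

theorem lapMatrix_IGraph_add_vecMulVec (hk : ¬ n ∣ 2 * k) (hl : ¬ n ∣ 2 * l) :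
    (IGraph n k l).lapMatrix ℂ + vecMulVec (Sum.elim 1 0) (Sum.elim 1 0) =
      fromBlocks (circulant ((3 : ℂ) • Pi.single 0 1 - stepVec n l + 1))
        (circulant (-Pi.single 0 1)) (circulant (-Pi.single 0 1))
        (circulant ((3 : ℂ) • Pi.single 0 1 - stepVec n k)) := by
  have hblock : vecMulVec (Sum.elim 1 0) (Sum.elim 1 0) =
      fromBlocks (circulant (1 : ZMod n → ℂ)) 0 0 (0 : Matrix (ZMod n) (ZMod n) ℂ) := by
    ext (i | i) (j | j) <;> simp [vecMulVec_apply]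
  rw [lapMatrix_IGraph hk hl, hblock, fromBlocks_add, circulant_add]
  simp only [add_zero]

theorem natCast_mul_tauI (hk : ¬ n ∣ 2 * k) (hl : ¬ n ∣ 2 * l) :
    (n : ℂ) * tauI n k l = ∏ j ∈ Finset.univ.erase (0 : ZMod n),
      ((3 - 2 * T ℂ k) * (3 - 2 * T ℂ l) - 1).eval (cosZMod j) := by
  -- Perturbing only the block of the `u`-vertices changes only the Fourier mode `j = 0`.
  have hdet := det_lapMatrix_add_vecMulVec (R := ℂ) (IGraph n k l) (Sum.elim 1 0) (Sum.elim 1 0)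
  rw [lapMatrix_IGraph_add_vecMulVec hk hl, det_fromBlocks_circulant] at hdet
  have hzero : (3 - 2 * (T ℂ l).eval (cosZMod (0 : ZMod n)) + n) *
      (3 - 2 * (T ℂ k).eval (cosZMod (0 : ZMod n))) - 1 = n := by
    rw [cosZMod_zero, T_eval_one, T_eval_one]
    ring
  have hsum : ∑ i : ZMod n ⊕ ZMod n, (Sum.elim 1 0 i : ℂ) = n := by simp
  rw [hsum, ← Finset.mul_prod_erase _ _ (Finset.mem_univ 0)] at hdet
  simp only [map_add, map_sub, map_neg, _root_.map_smul, Pi.add_apply, Pi.sub_apply, Pi.neg_apply,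
    Pi.smul_apply, dft_stepVec, dft_single, dft_one, zero_mul, neg_zero, AddChar.map_zero_eq_one,
    smul_eq_mul, mul_one, neg_mul_neg, if_true, hzero] at hdet
  rw [mul_assoc] at hdet
  refine (mul_left_cancel₀ (NeZero.ne (n : ℂ)) hdet).symm.trans
    (Finset.prod_congr rfl fun j hj => ?_)
  rw [if_neg (Finset.ne_of_mem_erase hj)]
  simp only [eval_sub, eval_mul, eval_ofNat, eval_one]
  ring

end Laplacian

section Polynomials

open Polynomial.Chebyshev

section ThreeSubTwoMulT

variable {R : Type*} [CommRing R] [IsDomain R] [NeZero (2 : R)] {m : ℕ}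

theorem degree_three_sub_two_mul_T (hm : m ≠ 0) : (3 - 2 * T R m).degree = m := by
  have hdeg : (2 * T R m).degree = m := by
    rw [← C_ofNat, degree_C_mul two_ne_zero, degree_T, Int.natAbs_natCast]
  rw [degree_sub_eq_right_of_degree_lt, hdeg]
  rw [hdeg, ← C_ofNat]
  exact degree_C_le.trans_lt (by exact_mod_cast hm.bot_lt)

theorem leadingCoeff_three_sub_two_mul_T (hm : m ≠ 0) :
    (3 - 2 * T R m).leadingCoeff = -2 ^ m := by
  have hnat : (3 - 2 * T R m).natDegree = m :=
    natDegree_eq_of_degree_eq_some (degree_three_sub_two_mul_T hm)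
  have hthree : (3 : R[X]).coeff m = 0 := coeff_C_of_ne_zero hm
  have hT : (T R m).coeff m = 2 ^ (m - 1) := by
    simpa [leadingCoeff] using leadingCoeff_T R m
  rw [leadingCoeff, hnat, coeff_sub, ← C_ofNat 2, coeff_C_mul, hT, hthree, zero_sub]
  exact congrArg Neg.neg (mul_pow_sub_one hm 2)

end ThreeSubTwoMulT

section Quotient

variable {R : Type*} [CommRing R] [IsDomain R] [NeZero (2 : R)] {k l : ℕ} {Q : R[X]}

theorem degree_one_lt_degree_three_sub_mul (hk : k ≠ 0) (hl : l ≠ 0) :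
    (1 : R[X]).degree < ((3 - 2 * T R k) * (3 - 2 * T R l)).degree := by
  rw [degree_mul, degree_three_sub_two_mul_T hk, degree_three_sub_two_mul_T hl, degree_one]
  exact_mod_cast Nat.add_pos_left hk.bot_lt l

theorem leadingCoeff_of_X_sub_one_mul_eq (hk : k ≠ 0) (hl : l ≠ 0)
    (hQ : (X - 1) * Q = (3 - 2 * T R k) * (3 - 2 * T R l) - 1) :
    Q.leadingCoeff = 2 ^ (k + l) := by
  have hlead := congrArg leadingCoeff hQ
  rwa [leadingCoeff_sub_of_degree_lt (degree_one_lt_degree_three_sub_mul hk hl), leadingCoeff_mul,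
    leadingCoeff_mul, leadingCoeff_three_sub_two_mul_T hk, leadingCoeff_three_sub_two_mul_T hl,
    ← C_1, leadingCoeff_X_sub_C, one_mul, neg_mul_neg, ← pow_add] at hlead

theorem natDegree_add_one_of_X_sub_one_mul_eq (hk : k ≠ 0) (hl : l ≠ 0)
    (hQ : (X - 1) * Q = (3 - 2 * T R k) * (3 - 2 * T R l) - 1) : Q.natDegree + 1 = k + l := by
  have hdeg := congrArg degree hQ
  rw [degree_sub_eq_left_of_degree_lt (degree_one_lt_degree_three_sub_mul hk hl), degree_mul,
    degree_mul, degree_three_sub_two_mul_T hk, degree_three_sub_two_mul_T hl, ← C_1,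
    degree_X_sub_C] at hdeg
  have hQ_ne : Q ≠ 0 := by
    rw [← leadingCoeff_ne_zero, leadingCoeff_of_X_sub_one_mul_eq hk hl hQ]
    exact pow_ne_zero _ two_ne_zero
  rw [degree_eq_natDegree hQ_ne, add_comm] at hdeg
  exact_mod_cast hdeg

end Quotient

theorem eval_one_ne_zero_of_X_sub_one_mul_eq {R : Type*} [CommRing R] [CharZero R] {k l : ℕ}
    (hk : k ≠ 0) {Q : R[X]}
    (hQ : (X - 1) * Q = (3 - 2 * T R k) * (3 - 2 * T R l) - 1) : Q.eval 1 ≠ 0 := by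
  have hderiv := congrArg (fun p => eval 1 (derivative p)) hQ
  have heval : Q.eval 1 = -((2 * (k ^ 2 + l ^ 2) : ℕ) : R) := by
    simp only [derivative_mul, derivative_sub, derivative_X, derivative_one, derivative_ofNat,
      eval_add, eval_mul, eval_sub, eval_X, eval_one, eval_ofNat, eval_zero,
      derivative_T_eval_one, T_eval_one, Int.cast_natCast] at hderiv
    push_cast
    linear_combination hderiv
  rw [heval, neg_ne_zero, Nat.cast_ne_zero]
  positivity

end Polynomials

open Polynomial.Chebyshev in
theorem tau_IGraph_formula_general (n k l : ℕ) [NeZero n] (hk : ¬ n ∣ 2 * k) (hl : ¬ n ∣ 2 * l)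
    (Q : ℂ[X]) (hQ : (X - 1) * Q = (3 - 2 * T ℂ k) * (3 - 2 * T ℂ l) - 1) :
    (tauI n k l : ℂ) = (-1) ^ ((n - 1) * (k + l)) * n *
      (Q.roots.map fun w => ((T ℂ n).eval w - 1) / (w - 1)).prod := by
  have hk₀ : k ≠ 0 := by
    rintro rfl
    exact hk (dvd_zero n)
  have hl₀ : l ≠ 0 := by
    rintro rfl
    exact hl (dvd_zero n)
  have hprod := natCast_mul_tauI hk hl
  simp only [← hQ, eval_mul, eval_sub, eval_X, eval_one, Finset.prod_mul_distrib] at hprod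
  rw [prod_erase_cosZMod_sub_one,
    prod_erase_eval_cosZMod (eval_one_ne_zero_of_X_sub_one_mul_eq hk₀ hQ),
    leadingCoeff_of_X_sub_one_mul_eq hk₀ hl₀ hQ] at hprod
  have hpow : (-1 / 2 : ℂ) ^ (n - 1) * (((2 : ℂ) ^ (k + l)) ^ (n - 1) *
      ((-1 / 2) ^ (n - 1)) ^ Q.natDegree) = (-1) ^ ((n - 1) * (k + l)) := by
    rw [mul_left_comm, ← pow_succ', natDegree_add_one_of_X_sub_one_mul_eq hk₀ hl₀ hQ,
      pow_right_comm, ← mul_pow, ← mul_pow, pow_mul]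
    norm_num
  refine mul_left_cancel₀ (NeZero.ne (n : ℂ)) (hprod.trans ?_)
  rw [← hpow]
  ring

open Polynomial Polynomial.Chebyshev in
/-- The number of spanning trees of the I-graph `I(n,k,l)`, where `gcd(k,l) = 1`:
`τ(n) = (-1)^((n-1)(k+l)) · n · ∏_w (T_n(w) - 1)/(w - 1)`, the product being over the
roots `w` (with multiplicity) of the degree-`k+l-1` polynomial `Q` with
`(X-1)·Q(X) = (3 - 2T_k(X))(3 - 2T_l(X)) - 1`. -/
theorem tau_IGraph_formula (n k l : ℕ)
    (hk : 1 ≤ k) (hkl : k ≤ l) (hn : 2 * l < n) (hcop : Nat.gcd k l = 1)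
    (Q : Polynomial ℂ) (hQdeg : Q.degree = (k + l - 1 : ℕ))
    (hQ : (X - 1) * Q = (3 - 2 * T ℂ k) * (3 - 2 * T ℂ l) - 1) :
    (tauI n k l : ℂ) = (-1) ^ ((n - 1) * (k + l)) * n *
      (Q.roots.map (fun w => ((T ℂ n).eval w - 1) / (w - 1))).prod := by
  have : NeZero n := ⟨by omega⟩
  exact tau_IGraph_formula_general n k l (Nat.not_dvd_of_pos_of_lt (by omega) (by omega))
    (Nat.not_dvd_of_pos_of_lt (by omega) (by omega)) Q hQ
end

section
/- Let n, k, l be integers with 1 ≤ k ≤ l, 2l < n and gcd(k,l) = 1. Then the Jacobian group Jac(I(n,k,l)) is not cyclic: there is no single element x of Jac(I(n,k,l)) whose ℤ-span is the whole group. In particular the minimum number of generators of Jac(I(n,k,l)) is at least 2. -/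
open Polynomial

/-!
Automorphisms of a graph `G` act on its Jacobian, and any two endomorphisms of a cyclic group
commute. For automorphisms `φ`, `ψ` and an edge `vw`, applying this to the class of `v - w` shows
that the divisors `φψv + ψφw` and `ψφv + φψw` are linearly equivalent. If no two adjacent vertices
of `G` can be separated by deleting two edges, then linearly equivalent effective divisors of degree
two are equal, because a function with divisor `D - E` pushes at least one unit of flow through each
of the three or more edges leaving a superlevel set. Hence `φψv = ψφv`, which fails when `φ` is a
rotation and `ψ` a reflection of an I-graph.
-/

section EdgeReachable

variable {V W : Type*} {G : SimpleGraph V} {H : SimpleGraph W} {k : ℕ} {u v : V}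

theorem isEdgeReachable_three_iff :
    G.IsEdgeReachable 3 u v ↔ ∀ e₁ e₂, (G.deleteEdges {e₁, e₂}).Reachable u v := by
  simp only [SimpleGraph.isEdgeReachable_add_one two_ne_zero, SimpleGraph.isEdgeReachable_two,
    SimpleGraph.deleteEdges_deleteEdges, Set.singleton_union]

theorem isEdgeReachable_three_of_adj (huv : G.Adj u v)
    (h : ∀ e, (G.deleteEdges {s(u, v), e}).Reachable u v) : G.IsEdgeReachable 3 u v := by
  refine isEdgeReachable_three_iff.mpr fun e₁ e₂ => ?_
  by_cases hmem : s(u, v) ∈ ({e₁, e₂} : Set (Sym2 V))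
  · rcases hmem with rfl | rfl
    · exact h e₂
    · exact Set.pair_comm e₁ _ ▸ h e₁
  · exact ((SimpleGraph.deleteEdges_adj ..).mpr ⟨huv, hmem⟩).reachable

theorem isEdgeReachable_map (h : G.IsEdgeReachable k u v) (φ : G →g H)
    (hφ : Function.Injective φ) : H.IsEdgeReachable k (φ u) (φ v) := by
  intro s hs
  have hpre : (Sym2.map φ ⁻¹' s).encard < k := by
    rw [← (Sym2.map.injective hφ).encard_image]
    exact (Set.encard_le_encard (Set.image_preimage_subset _ s)).trans_lt hs
  let ψ : G.deleteEdges (Sym2.map φ ⁻¹' s) →g H.deleteEdges s :=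
    ⟨φ, fun hab => by
      rw [SimpleGraph.deleteEdges_adj] at hab ⊢
      exact ⟨φ.map_adj hab.1, hab.2⟩⟩
  exact (h hpre).map ψ

variable [Fintype V] [DecidableEq V] [DecidableRel G.Adj]

theorem le_card_interedges_compl_of_isEdgeReachable (h : G.IsEdgeReachable k u v) {S : Finset V}
    (hu : u ∈ S) (hv : v ∉ S) : k ≤ (G.interedges S Sᶜ).card := by
  by_contra! hlt
  let cut : Finset (Sym2 V) := (G.interedges S Sᶜ).image fun e => s(e.1, e.2)
  have hcut : (cut : Set (Sym2 V)).encard < k := by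
    rw [Set.encard_coe_eq_coe_finsetCard]
    exact_mod_cast Finset.card_image_le.trans_lt hlt
  obtain ⟨p⟩ := h hcut
  obtain ⟨d, -, hfst, hsnd⟩ := p.exists_boundary_dart S hu hv
  obtain ⟨hadj, hnotMem⟩ := (SimpleGraph.deleteEdges_adj ..).mp d.adj
  exact hnotMem <| Finset.mem_image.mpr ⟨(d.fst, d.snd),
    G.mk_mem_interedges_iff.mpr ⟨hfst, Finset.mem_compl.mpr hsnd, hadj⟩, rfl⟩

end EdgeReachable

section Laplacian

open Matrix

variable {V : Type*} [Fintype V] [DecidableEq V] (G : SimpleGraph V) [DecidableRel G.Adj]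

theorem sum_lapMatrix_mulVec {R : Type*} [NonAssocRing R] (f : V → R) (S : Finset V) :
    ∑ v ∈ S, (G.lapMatrix R *ᵥ f) v = ∑ e ∈ G.interedges S Sᶜ, (f e.1 - f e.2) := by
  have hflow (v : V) : (G.lapMatrix R *ᵥ f) v = ∑ w, if G.Adj v w then f v - f w else 0 := by
    rw [SimpleGraph.lapMatrix_mulVec_apply, ← Finset.sum_filter, ← G.neighborFinset_eq_filter,
      Finset.sum_sub_distrib, Finset.sum_const, G.card_neighborFinset_eq_degree, nsmul_eq_mul]
  have hinner : ∑ v ∈ S, ∑ w ∈ S, (if G.Adj v w then f v - f w else 0) = 0 := by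
    have hdistrib (v w : V) : (if G.Adj v w then f v - f w else 0) =
        (if G.Adj v w then f v else 0) - if G.Adj w v then f w else 0 := by
      simp only [G.adj_comm w v]
      split_ifs <;> simp
    simp only [hdistrib, Finset.sum_sub_distrib]
    rw [sub_eq_zero]
    exact Finset.sum_comm
  calc ∑ v ∈ S, (G.lapMatrix R *ᵥ f) v
      = ∑ v ∈ S, ∑ w ∈ Sᶜ, if G.Adj v w then f v - f w else 0 := by
        simp only [hflow, ← Finset.sum_add_sum_compl S, Finset.sum_add_distrib, hinner, zero_add]
    _ = ∑ e ∈ G.interedges S Sᶜ, (f e.1 - f e.2) := by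
        rw [SimpleGraph.interedges_def, Finset.sum_filter, Finset.sum_product]

variable {G} {k : ℕ}

theorem eq_of_lapMatrix_mulVec_le {u v : V} (huv : G.IsEdgeReachable k u v)
    {f D : V → ℤ} (hD : 0 ≤ D) (hdeg : ∑ w, D w < k) (hf : G.lapMatrix ℤ *ᵥ f ≤ D) :
    f u = f v := by
  wlog hlt : f v < f u generalizing u v
  · by_contra hne
    exact hne (this huv.symm (lt_of_le_of_ne (not_lt.mp hlt) hne)).symm
  let S : Finset V := {w | f u ≤ f w}
  refine absurd hdeg (not_lt.mpr ?_)
  calc (k : ℤ) ≤ (G.interedges S Sᶜ).card := by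
        exact_mod_cast le_card_interedges_compl_of_isEdgeReachable huv (by simp [S])
          (by simpa [S] using hlt)
    _ ≤ ∑ e ∈ G.interedges S Sᶜ, (f e.1 - f e.2) := by
        rw [Finset.card_eq_sum_ones, Nat.cast_sum]
        refine Finset.sum_le_sum fun e he => ?_
        have := G.mem_interedges_iff.mp he
        simp only [S, Finset.mem_compl, Finset.mem_filter_univ] at this
        push_cast
        lia
    _ = ∑ w ∈ S, (G.lapMatrix ℤ *ᵥ f) w := (sum_lapMatrix_mulVec G f S).symm
    _ ≤ ∑ w ∈ S, D w := Finset.sum_le_sum fun w _ => hf w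
    _ ≤ ∑ w, D w := Finset.sum_le_univ_sum_of_nonneg hD

theorem eq_of_lapMatrix_mulVec_eq_sub (hG : ∀ u v, G.Adj u v → G.IsEdgeReachable k u v)
    {f D E : V → ℤ} (hD : 0 ≤ D) (hE : 0 ≤ E) (hdeg : ∑ w, D w < k)
    (hf : G.lapMatrix ℤ *ᵥ f = D - E) : D = E := by
  have hadj {u v : V} (huv : G.Adj u v) : f u = f v :=
    eq_of_lapMatrix_mulVec_le (hG u v huv) hD hdeg (hf ▸ sub_le_self D hE)
  rw [← sub_eq_zero, ← hf]
  ext v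
  rw [SimpleGraph.lapMatrix_mulVec_apply,
    Finset.sum_congr rfl fun w hw => (hadj ((G.mem_neighborFinset v w).mp hw)).symm]
  simp

theorem lapMatrix_submatrix (φ : G ≃g G) (R : Type*) [AddGroupWithOne R] :
    (G.lapMatrix R).submatrix φ φ = G.lapMatrix R := by
  ext u v
  simp [SimpleGraph.lapMatrix, SimpleGraph.degMatrix, Matrix.diagonal_apply, φ.map_adj_iff]

theorem lapMatrix_mulVec_comp (φ : G ≃g G) {R : Type*} [NonAssocRing R] (f : V → R) :
    (G.lapMatrix R *ᵥ f) ∘ φ = G.lapMatrix R *ᵥ (f ∘ φ) := by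
  conv_rhs => rw [← lapMatrix_submatrix φ R]
  have h := Matrix.submatrix_mulVec_equiv (G.lapMatrix R) (f ∘ φ) φ φ.toEquiv
  have hcancel : (f ∘ φ) ∘ φ.toEquiv.symm = f := by
    ext v
    exact congrArg f (φ.apply_symm_apply v)
  rw [hcancel] at h
  exact h.symm

end Laplacian

section Torsion

variable {A : Type*} [AddCommGroup A]

theorem mem_torsion_of_forall_dual_eq_zero [Module.Finite ℤ A] {a : A}
    (h : ∀ φ : A →ₗ[ℤ] ℤ, φ a = 0) : a ∈ AddCommGroup.torsion A := by
  rw [← Submodule.torsion_int, Submodule.mem_toAddSubgroup, ← Submodule.Quotient.mk_eq_zero,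
    ← Module.forall_dual_apply_eq_zero_iff ℤ]
  exact fun φ => h (φ ∘ₗ Submodule.mkQ _)

theorem map_map_comm_of_isAddCyclic_torsion [IsAddCyclic (AddCommGroup.torsion A)]
    (φ ψ : A →+ A) {a : A} (ha : a ∈ AddCommGroup.torsion A) : φ (ψ a) = ψ (φ a) := by
  have hsmul (φ : A →+ A) : ∃ m : ℤ, ∀ b ∈ AddCommGroup.torsion A, φ b = m • b := by
    obtain ⟨m, hm⟩ := ((φ.comp (AddCommGroup.torsion A).subtype).codRestrict
      (AddCommGroup.torsion A) fun b => φ.isOfFinAddOrder b.2).map_addCyclic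
    exact ⟨m, fun b hb => congrArg Subtype.val (hm ⟨b, hb⟩)⟩
  obtain ⟨m, hm⟩ := hsmul φ
  obtain ⟨m', hm'⟩ := hsmul ψ
  simp only [hm a ha, hm' a ha, map_zsmul, smul_comm m m']

end Torsion

section Jacobian

open Matrix

theorem vecMul_dual_single_eq_zero {m : Type} [Fintype m] [DecidableEq m] (M : Matrix m m ℤ)
    (φ : cokerM M →ₗ[ℤ] ℤ) : (fun i => φ (Submodule.Quotient.mk (Pi.single i 1))) ᵥ* M = 0 := by
  ext j
  let ψ : (m → ℤ) →ₗ[ℤ] ℤ := φ ∘ₗ Submodule.mkQ _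
  have hmem : M.col j ∈ LinearMap.range M.mulVecLin := ⟨Pi.single j 1, M.mulVec_single_one j⟩
  calc ∑ i, ψ (Pi.single i 1) * M i j
      = ψ (∑ i, M.col j i • Pi.single i 1) := by
        simp only [map_sum, map_smul, smul_eq_mul, mul_comm, Matrix.col_apply]
    _ = ψ (M.col j) := by rw [← pi_eq_sum_univ' (M.col j)]
    _ = 0 := (congrArg φ ((Submodule.Quotient.mk_eq_zero _).mpr hmem)).trans (map_zero φ)

variable {V : Type} [Fintype V] [DecidableEq V] {G : SimpleGraph V} [DecidableRel G.Adj]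

variable (G) in
/-- The class of the vertex `v`, regarded as a divisor of degree one. -/
def vertexClass (v : V) : cokerM (G.lapMatrix ℤ) :=
  Submodule.Quotient.mk (Pi.single v 1)

theorem vertexClass_sub_mem_torsion {u v : V} (huv : G.Reachable u v) :
    vertexClass G u - vertexClass G v ∈ AddCommGroup.torsion (cokerM (G.lapMatrix ℤ)) := by
  refine mem_torsion_of_forall_dual_eq_zero fun φ => ?_
  have hφ : G.lapMatrix ℤ *ᵥ (fun w => φ (vertexClass G w)) = 0 := by
    rw [← Matrix.vecMul_transpose, (G.isSymm_lapMatrix ℤ).eq]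
    exact vecMul_dual_single_eq_zero _ φ
  rw [map_sub, sub_eq_zero]
  exact eq_of_lapMatrix_mulVec_le (SimpleGraph.isEdgeReachable_one.mpr huv) le_rfl (by simp) hφ.le

/-- The action of a graph automorphism on divisor classes, by pushforward of divisors: a divisor
`f : V → ℤ` is sent to `f ∘ φ⁻¹`. -/
def cokerLapMap (φ : G ≃g G) : cokerM (G.lapMatrix ℤ) →ₗ[ℤ] cokerM (G.lapMatrix ℤ) :=
  Submodule.mapQ _ _ (LinearMap.funLeft ℤ ℤ φ.symm) <| by
    rintro _ ⟨f, rfl⟩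
    exact ⟨f ∘ φ.symm, (lapMatrix_mulVec_comp φ.symm f).symm⟩

theorem cokerLapMap_vertexClass (φ : G ≃g G) (v : V) :
    cokerLapMap φ (vertexClass G v) = vertexClass G (φ v) := by
  refine congrArg Submodule.Quotient.mk ?_
  ext w
  simp [LinearMap.funLeft_apply, Pi.single_apply, RelIso.symm_apply_eq]

theorem eq_or_eq_of_vertexClass_add_eq (hG : ∀ u v, G.Adj u v → G.IsEdgeReachable 3 u v)
    {u₁ u₂ v₁ v₂ : V}
    (h : vertexClass G u₁ + vertexClass G u₂ = vertexClass G v₁ + vertexClass G v₂) :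
    u₁ = v₁ ∨ u₁ = v₂ := by
  obtain ⟨f, hf⟩ := (Submodule.Quotient.eq _).mp h
  have hsingle (v : V) : (0 : V → ℤ) ≤ Pi.single v 1 := Pi.single_nonneg.mpr zero_le_one
  have heq := eq_of_lapMatrix_mulVec_eq_sub hG (add_nonneg (hsingle u₁) (hsingle u₂))
    (add_nonneg (hsingle v₁) (hsingle v₂)) (by simp [Finset.sum_add_distrib]) hf
  by_contra! hne
  have hu₁ : 1 + (Pi.single u₂ 1 : V → ℤ) u₁ = 0 := by
    simpa only [Pi.add_apply, Pi.single_eq_same, Pi.single_eq_of_ne hne.1,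
      Pi.single_eq_of_ne hne.2, add_zero] using congrFun heq u₁
  have hu₂ : 0 ≤ (Pi.single u₂ 1 : V → ℤ) u₁ := hsingle u₂ u₁
  lia

theorem not_isAddCyclic_torsion_coker_lapMatrix (hG : ∀ u v, G.Adj u v → G.IsEdgeReachable 3 u v)
    (φ ψ : G ≃g G) {v w : V} (hvw : G.Adj v w) (hcomm : φ (ψ v) ≠ ψ (φ v)) :
    ¬ IsAddCyclic (AddCommGroup.torsion (cokerM (G.lapMatrix ℤ))) := by
  intro hcyc
  have h := map_map_comm_of_isAddCyclic_torsion (cokerLapMap φ).toAddMonoidHom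
    (cokerLapMap ψ).toAddMonoidHom (vertexClass_sub_mem_torsion hvw.reachable)
  simp only [LinearMap.toAddMonoidHom_coe, map_sub, cokerLapMap_vertexClass,
    sub_eq_sub_iff_add_eq_add] at h
  rcases eq_or_eq_of_vertexClass_add_eq hG h with heq | heq
  · exact hcomm heq
  · exact hvw.ne (φ.injective.comp ψ.injective heq)

end Jacobian

namespace IGraph

variable {n k l : ℕ}

theorem adj_inl_inl {i j : ZMod n} :
    (IGraph n k l).Adj (.inl i) (.inl j) ↔ i ≠ j ∧ (j = i + l ∨ i = j + l) := by
  simp [IGraph, IRel]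

theorem adj_inr_inr {i j : ZMod n} :
    (IGraph n k l).Adj (.inr i) (.inr j) ↔ i ≠ j ∧ (j = i + k ∨ i = j + k) := by
  simp [IGraph, IRel]

theorem adj_inl_inr {i j : ZMod n} : (IGraph n k l).Adj (.inl i) (.inr j) ↔ i = j := by
  simp [IGraph, IRel]

theorem adj_inr_inl {i j : ZMod n} : (IGraph n k l).Adj (.inr i) (.inl j) ↔ i = j := by
  rw [SimpleGraph.adj_comm, adj_inl_inr, eq_comm]

variable (n k l) in
/-- The exchange of the two layers of vertices, which also exchanges the two steps. -/
def swap : IGraph n k l ≃g IGraph n l k where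
  toEquiv := Equiv.sumComm _ _
  map_rel_iff' {a b} := by
    rcases a with i | i <;> rcases b with j | j <;>
      simp [adj_inl_inl, adj_inr_inr, adj_inl_inr, adj_inr_inl]

variable (n k l) in
/-- The rotation `u_i ↦ u_{i+1}`, `v_i ↦ v_{i+1}`. -/
def rotation : IGraph n k l ≃g IGraph n k l where
  toEquiv := Equiv.sumCongr (Equiv.addRight 1) (Equiv.addRight 1)
  map_rel_iff' {a b} := by
    rcases a with i | i <;> rcases b with j | j <;>
      simp [adj_inl_inl, adj_inr_inr, adj_inl_inr, adj_inr_inl, add_right_comm]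

variable (n k l) in
/-- The reflection `u_i ↦ u_{-i}`, `v_i ↦ v_{-i}`. -/
def reflection : IGraph n k l ≃g IGraph n k l where
  toEquiv := Equiv.sumCongr (Equiv.neg _) (Equiv.neg _)
  map_rel_iff' {a b} := by
    have hstep (i j c : ZMod n) : -j = -i + c ↔ i = j + c := by
      rw [neg_eq_iff_eq_neg, neg_add, neg_neg, ← sub_eq_add_neg, eq_sub_iff_add_eq, eq_comm]
    rcases a with i | i <;> rcases b with j | j <;>
      simp [adj_inl_inl, adj_inr_inr, adj_inl_inr, adj_inr_inl, hstep, or_comm]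

theorem rotation_reflection_ne (h : (2 : ZMod n) ≠ 0) :
    rotation n k l (reflection n k l (.inl 0)) ≠ reflection n k l (rotation n k l (.inl 0)) := by
  simp only [rotation, reflection, RelIso.coe_fn_mk, Equiv.sumCongr_apply, Sum.map_inl,
    Equiv.coe_addRight, Equiv.neg_apply, ne_eq, Sum.inl.injEq]
  intro heq
  exact h (by linear_combination heq)

theorem reachable_inl_add_of_forall_ne [NeZero n] {H : SimpleGraph (ZMod n ⊕ ZMod n)}
    {x i : ZMod n} (hH : ∀ j ≠ i, H.Reachable (.inl j) (.inl (j + x))) :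
    H.Reachable (.inl i) (.inl (i + x)) := by
  by_contra hi
  have hwalk (t : ℕ) : H.Reachable (.inl (i + x)) (.inl (i + x + t * x)) := by
    induction t with
    | zero => simp
    | succ t ih =>
      have hne : i + x + t * x ≠ i := fun heq => hi (heq ▸ ih).symm
      have hstep := ih.trans (hH _ hne)
      rwa [add_assoc (i + x), ← add_one_mul, ← Nat.cast_add_one] at hstep
  -- Continuing round the cycle through `i + x` by steps of `x` leads back to `i` at step `-1`.
  have hlast := hwalk (-1 : ZMod n).val
  rw [ZMod.natCast_zmod_val, neg_one_mul, add_neg_cancel_right] at hlast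
  exact hi hlast.symm

theorem reachable_inl_add_of_forall_inr {H : SimpleGraph (ZMod n ⊕ ZMod n)} {x y i : ZMod n}
    (hspoke : ∀ j, H.Reachable (.inl j) (.inr j))
    (hinner : ∀ j, H.Reachable (.inr j) (.inr (j + y)))
    (houter : H.Reachable (.inl (i + y)) (.inl (i + y + x))) :
    H.Reachable (.inl i) (.inl (i + x)) := by
  have hacross (j : ZMod n) : H.Reachable (.inl j) (.inl (j + y)) :=
    (hspoke j).trans ((hinner j).trans (hspoke (j + y)).symm)
  have hback := hacross (i + x)
  rw [add_right_comm] at hback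
  exact (hacross i).trans (houter.trans hback.symm)

theorem outerEdge_injective (hl : 2 * (l : ZMod n) ≠ 0) :
    Function.Injective fun i : ZMod n => (s(.inl i, .inl (i + l)) : Sym2 (ZMod n ⊕ ZMod n)) := by
  intro i j h
  rcases Sym2.eq_iff.mp h with ⟨hij, -⟩ | ⟨hij, hji⟩
  · exact Sum.inl_injective hij
  · have hij := Sum.inl_injective hij
    have hji := Sum.inl_injective hji
    exact absurd (by linear_combination hji - hij) hl

theorem isEdgeReachable_inl_add [NeZero n] (hk : 2 * (k : ZMod n) ≠ 0) (hl : 2 * (l : ZMod n) ≠ 0)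
    (i : ZMod n) : (IGraph n k l).IsEdgeReachable 3 (.inl i) (.inl (i + l)) := by
  have hk0 : (k : ZMod n) ≠ 0 := right_ne_zero_of_mul hk
  have hl0 : (l : ZMod n) ≠ 0 := right_ne_zero_of_mul hl
  have hadj (j : ZMod n) : (IGraph n k l).Adj (.inl j) (.inl (j + l)) :=
    adj_inl_inl.mpr ⟨by simpa using hl0, .inl rfl⟩
  refine isEdgeReachable_three_of_adj (hadj i) fun e => ?_
  have houter (j : ZMod n) (hji : j ≠ i) (hje : s(.inl j, .inl (j + l)) ≠ e) :
      ((IGraph n k l).deleteEdges {s(.inl i, .inl (i + l)), e}).Reachable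
        (.inl j) (.inl (j + l)) :=
    ((SimpleGraph.deleteEdges_adj ..).mpr ⟨hadj j, by
      simpa [hje] using (outerEdge_injective hl).ne hji⟩).reachable
  by_cases he : ∃ m : ZMod n, e = s(.inl m, .inl (m + l))
  · obtain ⟨m, rfl⟩ := he
    set H := (IGraph n k l).deleteEdges {s(.inl i, .inl (i + l)), s(.inl m, .inl (m + l))}
    have hspoke (j : ZMod n) : H.Reachable (.inl j) (.inr j) :=
      ((SimpleGraph.deleteEdges_adj ..).mpr ⟨adj_inl_inr.mpr rfl, by simp⟩).reachable
    have hinner (j : ZMod n) : H.Reachable (.inr j) (.inr (j + k)) :=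
      ((SimpleGraph.deleteEdges_adj ..).mpr
        ⟨adj_inr_inr.mpr ⟨by simpa using hk0, .inl rfl⟩, by simp⟩).reachable
    have hshift {y : ZMod n} (hy0 : y ≠ 0) (hym : i + y ≠ m)
        (hy : ∀ j, H.Reachable (.inr j) (.inr (j + y))) : H.Reachable (.inl i) (.inl (i + l)) :=
      reachable_inl_add_of_forall_inr hspoke hy
        (houter _ (by simpa using hy0) ((outerEdge_injective hl).ne hym))
    by_cases hkm : i + k = m
    · exact hshift (neg_ne_zero.mpr hk0) (by grind) fun j => by
        simpa using (hinner (j + -k)).symm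
    · exact hshift hk0 hkm hinner
  · exact reachable_inl_add_of_forall_ne fun j hji => houter j hji fun h => he ⟨j, h.symm⟩

theorem isEdgeReachable_inr_add [NeZero n] (hk : 2 * (k : ZMod n) ≠ 0) (hl : 2 * (l : ZMod n) ≠ 0)
    (i : ZMod n) : (IGraph n k l).IsEdgeReachable 3 (.inr i) (.inr (i + k)) :=
  isEdgeReachable_map (isEdgeReachable_inl_add hl hk i) (swap n l k).toHom (swap n l k).injective

theorem reachable_inl_inr_of_square {H : SimpleGraph (ZMod n ⊕ ZMod n)} {x y i m : ZMod n}
    (hx0 : x ≠ 0) (hy0 : y ≠ 0) (houter : ∀ j, H.Reachable (.inl j) (.inl (j + x)))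
    (hinner : ∀ j, H.Reachable (.inr j) (.inr (j + y)))
    (hspoke : ∀ j, j ≠ i → j ≠ m → H.Reachable (.inl j) (.inr j))
    (hxm : i + x ≠ m) (hym : i + y ≠ m) (hxym : i + x + y ≠ m ∨ x = y) :
    H.Reachable (.inl i) (.inr i) := by
  have hix : H.Reachable (.inl i) (.inr (i + x)) :=
    (houter i).trans (hspoke _ (by simpa using hx0) hxm)
  by_cases hxy : x = y
  · subst hxy
    exact hix.trans (hinner i).symm
  have hixy : H.Reachable (.inl i) (.inr (i + x + y)) := hix.trans (hinner _)
  by_cases hi : i + x + y = i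
  · rwa [hi] at hixy
  have hiyx : H.Reachable (.inr i) (.inl (i + x + y)) := by
    rw [add_right_comm]
    exact (hinner i).trans ((hspoke _ (by simpa using hy0) hym).symm.trans (houter _))
  exact hixy.trans ((hspoke _ hi (hxym.resolve_right hxy)).symm.trans hiyx.symm)

theorem exists_signs_avoiding {R : Type*} [CommRing R] {a b : R} (ha : 2 * a ≠ 0)
    (hb : 2 * b ≠ 0) (i m : R) : ∃ x y : R, (x = a ∨ x = -a) ∧ (y = b ∨ y = -b) ∧
      i + x ≠ m ∧ i + y ≠ m ∧ (i + x + y ≠ m ∨ x = y) := by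
  have hsign {c : R} (hc : 2 * c ≠ 0) : ∃ x, (x = c ∨ x = -c) ∧ i + x ≠ m := by
    by_contra! h
    exact hc (by linear_combination h c (.inl rfl) - h (-c) (.inr rfl))
  obtain ⟨x, hx, hxm⟩ := hsign ha
  obtain ⟨y, hy, hym⟩ := hsign hb
  by_cases hxym : i + x + y ≠ m ∨ x = y
  · exact ⟨x, y, hx, hy, hxm, hym, hxym⟩
  obtain ⟨hsum, hxy⟩ : i + x + y = m ∧ x ≠ y := by simpa using hxym
  have hx2 : 2 * x ≠ 0 := by rcases hx with rfl | rfl <;> simpa only [mul_neg, neg_ne_zero]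
  have hy2 : 2 * y ≠ 0 := by rcases hy with rfl | rfl <;> simpa only [mul_neg, neg_ne_zero]
  by_cases hnegx : i - x = m
  · exact ⟨x, -y, hx, by grind, hxm, fun h => hxy (by linear_combination h - hnegx),
      .inl fun h => hy2 (by linear_combination hsum - h)⟩
  · exact ⟨-x, y, by grind, hy, by rwa [← sub_eq_add_neg], hym,
      .inl fun h => hx2 (by linear_combination hsum - h)⟩

theorem isEdgeReachable_inl_inr [NeZero n] (hk : 2 * (k : ZMod n) ≠ 0) (hl : 2 * (l : ZMod n) ≠ 0)
    (i : ZMod n) : (IGraph n k l).IsEdgeReachable 3 (.inl i) (.inr i) := by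
  refine isEdgeReachable_three_of_adj (adj_inl_inr.mpr rfl) fun e => ?_
  set H := (IGraph n k l).deleteEdges {s(.inl i, .inr i), e}
  have houter {x : ZMod n} (hx : x = l ∨ x = -l) (j : ZMod n) :
      H.Reachable (.inl j) (.inl (j + x)) := by
    have hstep (j : ZMod n) := isEdgeReachable_three_iff.mp (isEdgeReachable_inl_add hk hl j)
      s(.inl i, .inr i) e
    rcases hx with rfl | rfl
    · exact hstep j
    · simpa using (hstep (j + -l)).symm
  have hinner {y : ZMod n} (hy : y = k ∨ y = -k) (j : ZMod n) :
      H.Reachable (.inr j) (.inr (j + y)) := by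
    have hstep (j : ZMod n) := isEdgeReachable_three_iff.mp (isEdgeReachable_inr_add hk hl j)
      s(.inl i, .inr i) e
    rcases hy with rfl | rfl
    · exact hstep j
    · simpa using (hstep (j + -k)).symm
  obtain ⟨m, hm⟩ : ∃ m, ∀ j, j ≠ i → j ≠ m → H.Reachable (.inl j) (.inr j) := by
    have hspoke (j : ZMod n) (hji : j ≠ i) (hje : s(.inl j, .inr j) ≠ e) :
        H.Reachable (.inl j) (.inr j) :=
      ((SimpleGraph.deleteEdges_adj ..).mpr ⟨adj_inl_inr.mpr rfl, by simp [hji, hje]⟩).reachable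
    by_cases he : ∃ m : ZMod n, e = s(.inl m, .inr m)
    · obtain ⟨m, rfl⟩ := he
      exact ⟨m, fun j hji hjm => hspoke j hji (by simpa using hjm)⟩
    · exact ⟨i, fun j hji _ => hspoke j hji fun h => he ⟨j, h.symm⟩⟩
  obtain ⟨x, y, hx, hy, hxm, hym, hxym⟩ := exists_signs_avoiding hl hk i m
  have hx0 : x ≠ 0 := by rcases hx with rfl | rfl <;> simpa using right_ne_zero_of_mul hl
  have hy0 : y ≠ 0 := by rcases hy with rfl | rfl <;> simpa using right_ne_zero_of_mul hk
  exact reachable_inl_inr_of_square hx0 hy0 (houter hx) (hinner hy) hm hxm hym hxym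

theorem isEdgeReachable_of_adj [NeZero n] (hk : 2 * (k : ZMod n) ≠ 0)
    (hl : 2 * (l : ZMod n) ≠ 0) {a b : ZMod n ⊕ ZMod n} (hab : (IGraph n k l).Adj a b) :
    (IGraph n k l).IsEdgeReachable 3 a b := by
  rcases a with i | i <;> rcases b with j | j
  · obtain ⟨-, rfl | rfl⟩ := adj_inl_inl.mp hab
    · exact isEdgeReachable_inl_add hk hl i
    · exact (isEdgeReachable_inl_add hk hl j).symm
  · obtain rfl := adj_inl_inr.mp hab
    exact isEdgeReachable_inl_inr hk hl i
  · obtain rfl := adj_inr_inl.mp hab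
    exact (isEdgeReachable_inl_inr hk hl i).symm
  · obtain ⟨-, rfl | rfl⟩ := adj_inr_inr.mp hab
    · exact isEdgeReachable_inr_add hk hl i
    · exact (isEdgeReachable_inr_add hk hl j).symm

end IGraph

theorem two_mul_natCast_zmod_ne_zero {n m : ℕ} (hm : 0 < m) (hmn : 2 * m < n) :
    2 * (m : ZMod n) ≠ 0 := by
  intro h
  have hdvd : n ∣ 2 * m := (ZMod.natCast_eq_zero_iff _ _).mp (by exact_mod_cast h)
  exact hmn.not_ge (Nat.le_of_dvd (by positivity) hdvd)

theorem jacobian_IGraph_not_cyclic_general (n k l : ℕ) [NeZero n] (hk : 2 * (k : ZMod n) ≠ 0)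
    (hl : 2 * (l : ZMod n) ≠ 0) :
    ¬ ∃ x : JacI n k l, ∀ y : JacI n k l, y ∈ AddSubgroup.zmultiples x := fun hcyc =>
  not_isAddCyclic_torsion_coker_lapMatrix (fun _ _ => IGraph.isEdgeReachable_of_adj hk hl)
    (IGraph.rotation n k l) (IGraph.reflection n k l) (IGraph.adj_inl_inr.mpr rfl)
    (IGraph.rotation_reflection_ne (left_ne_zero_of_mul hk)) ⟨hcyc⟩

/-- The Jacobian group of the I-graph `I(n,k,l)` is not cyclic: no single element
`ℤ`-spans it. Hence its minimum number of generators is at least `2`. -/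
theorem jacobian_IGraph_not_cyclic (n k l : ℕ) [NeZero n]
    (hk : 1 ≤ k) (hkl : k ≤ l) (hn : 2 * l < n) (hcop : Nat.gcd k l = 1) :
    ¬ ∃ x : JacI n k l, ∀ y : JacI n k l, y ∈ AddSubgroup.zmultiples x :=
  jacobian_IGraph_not_cyclic_general n k l (two_mul_natCast_zmod_ne_zero hk (by lia))
    (two_mul_natCast_zmod_ne_zero (by lia) hn)
end

section
/- Let n, k, l be integers with 1 ≤ k ≤ l, 2l < n and gcd(k,l) = 1. Then the Jacobian group Jac(I(n,k,l)) can be generated by at most 2k + 2l − 1 elements: there exists a finite subset S of Jac(I(n,k,l)) with |S| ≤ 2k + 2l − 1 whose ℤ-span is the whole group. -/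
open Polynomial

/-!
In the cokernel of the Laplacian the vertices satisfy `3u_i = u_{i+l} + u_{i-l} + v_i` and
`3v_i = v_{i+k} + v_{i-k} + u_i`. Eliminating `v`, the sequence `u_0, u_1, …` satisfies the linear
recurrence with characteristic polynomial `F = FpolyI k l`, which is monic of degree `2k + 2l`, so
`2k + 2l` consecutive `u`'s span all the `u`'s; the `v`'s are combinations of these. The Laplacian
is singular, so the cokernel has positive rank, and the torsion subgroup of an abelian group with
`s` generators and rank `r` needs at most `s - r` generators.
-/

section Torsion

theorem spanFinrank_add_finrank_quotient_le {R M : Type*} [CommRing R] [IsDomain R]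
    [IsPrincipalIdealRing R] [AddCommGroup M] [Module R M] [Module.Finite R M]
    (N : Submodule R M) :
    N.spanFinrank + Module.finrank R (M ⧸ N) ≤ (⊤ : Submodule R M).spanFinrank := by
  obtain ⟨S, hcard, hspan⟩ :=
    (Module.Finite.fg_top (R := R) (M := M)).exists_span_finset_card_eq_spanFinrank
  -- Pulled back to the free module `S → R`, `N` becomes free, so its rank counts its generators.
  let φ : (S → R) →ₗ[R] M := Fintype.linearCombination R ((↑) : S → M)
  have hφ : Function.Surjective φ := by
    rw [← LinearMap.range_eq_top, Fintype.range_linearCombination, Subtype.range_coe, hspan]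
  have hmap : (N.comap φ).map φ = N := Submodule.map_comap_eq_of_surjective hφ N
  have hker : LinearMap.ker (N.mkQ ∘ₗ φ) = N.comap φ := by
    rw [LinearMap.ker_comp, Submodule.ker_mkQ]
  have hquot : Module.finrank R ((S → R) ⧸ N.comap φ) = Module.finrank R (M ⧸ N) := by
    rw [← hker]
    exact ((N.mkQ ∘ₗ φ).quotKerEquivOfSurjective (N.mkQ_surjective.comp hφ)).finrank_eq
  have hle : N.spanFinrank ≤ Module.finrank R (N.comap φ) :=
    calc N.spanFinrank = ((N.comap φ).map φ).spanFinrank := by rw [hmap]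
      _ ≤ (N.comap φ).spanFinrank :=
        Submodule.spanFinrank_map_le_of_fg φ (IsNoetherian.noetherian _)
      _ = Module.finrank R (N.comap φ) := by
        rw [Module.finrank_eq_spanFinrank_of_free, Submodule.spanFinrank_top]
  calc N.spanFinrank + Module.finrank R (M ⧸ N)
      ≤ Module.finrank R (N.comap φ) + Module.finrank R ((S → R) ⧸ N.comap φ) := by
        rw [hquot]
        gcongr
    _ = (⊤ : Submodule R M).spanFinrank := by
        rw [add_comm, Submodule.finrank_quotient_add_finrank, Module.finrank_fintype_fun_eq_card,
          Fintype.card_coe, hcard]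

theorem exists_finset_closure_torsion_eq_top (C : Type*) [AddCommGroup C] [Module.Finite ℤ C] :
    ∃ S : Finset (AddCommGroup.torsion C),
      S.card + Module.finrank ℤ C ≤ (⊤ : Submodule ℤ C).spanFinrank ∧
        AddSubgroup.closure (S : Set (AddCommGroup.torsion C)) = ⊤ := by
  let T : Submodule ℤ C := AddSubgroup.toIntSubmodule (AddCommGroup.torsion C)
  obtain ⟨S, hcard, hspan⟩ :=
    (Module.Finite.fg_top (R := ℤ) (M := T)).exists_span_finset_card_eq_spanFinrank
  have hle : S.card + Module.finrank ℤ C ≤ (⊤ : Submodule ℤ C).spanFinrank := by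
    rw [hcard, Submodule.spanFinrank_top, ← finrank_quotient_torsion_eq]
    exact spanFinrank_add_finrank_quotient_le T
  refine ⟨S, hle, ?_⟩
  rw [← Submodule.span_int_eq_addSubgroupClosure]
  exact congrArg Submodule.toAddSubgroup hspan

end Torsion

section LinearRecurrence

variable {R M : Type*} [CommRing R] [AddCommGroup M] [Module R M] {F : R[X]} {d : ℕ}

theorem pow_apply_mem_span_of_aeval_apply_eq_zero (hF : F.IsMonicOfDegree d)
    {T : Module.End R M} {x : M} (h : aeval T F x = 0) (j : ℕ) :
    (T ^ j) x ∈ Submodule.span R ((fun i => (T ^ i) x) '' Set.Iio d) := by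
  classical
  obtain _ | _ := subsingleton_or_nontrivial R
  · have := Module.subsingleton R M
    rw [Subsingleton.elim ((T ^ j) x) 0]
    exact zero_mem _
  have hrem : aeval T (X ^ j %ₘ F) x = (T ^ j) x := by
    conv_rhs => rw [← aeval_X_pow (R := R) T, ← modByMonic_add_div (X ^ j) F]
    rw [mul_comm F, map_add, map_mul, LinearMap.add_apply, Module.End.mul_apply, h, map_zero,
      add_zero]
  have hlt : X ^ j %ₘ F ∈ degreeLT R d := by
    rw [mem_degreeLT, ← hF.natDegree_eq, ← degree_eq_natDegree hF.ne_zero]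
    exact degree_modByMonic_lt _ hF.monic
  rw [degreeLT_eq_span_X_pow] at hlt
  have hmem := Submodule.mem_map_of_mem (f := LinearMap.applyₗ x ∘ₗ (aeval T).toLinearMap) hlt
  simpa [Submodule.map_span, Set.image_image, hrem] using hmem

/-- The left shift `(f₀, f₁, f₂, …) ↦ (f₁, f₂, f₃, …)`: a linear recurrence with characteristic
polynomial `F` is the equation `aeval (sequenceShift R M) F f = 0`. -/
def sequenceShift (R M : Type*) [CommRing R] [AddCommGroup M] [Module R M] :
    Module.End R (ℕ → M) :=
  LinearMap.funLeft R M (· + 1)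

theorem sequenceShift_pow_apply (f : ℕ → M) (m i : ℕ) :
    (sequenceShift R M ^ m) f i = f (i + m) := by
  induction m generalizing i with
  | zero => rfl
  | succ m ih =>
    rw [pow_succ', Module.End.mul_apply, sequenceShift, LinearMap.funLeft_apply, ← sequenceShift,
      ih, add_right_comm, add_assoc]

theorem apply_mem_span_of_aeval_sequenceShift_eq_zero (hF : F.IsMonicOfDegree d) {f : ℕ → M}
    (h : aeval (sequenceShift R M) F f = 0) (j : ℕ) :
    f j ∈ Submodule.span R (f '' Set.Iio d) := by
  have hmem := Submodule.mem_map_of_mem (f := LinearMap.proj 0)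
    (pow_apply_mem_span_of_aeval_apply_eq_zero hF h j)
  simpa [Submodule.map_span, Set.image_image, sequenceShift_pow_apply] using hmem

theorem aeval_three_mul_X_pow_sub_apply (f : ℕ → M) (a j : ℕ) :
    aeval (sequenceShift R M) (3 * X ^ a - X ^ (2 * a) - 1 : R[X]) f j =
      (3 : R) • f (j + a) - f (j + 2 * a) - f j := by
  simp only [map_sub, map_mul, map_ofNat, map_one, aeval_X_pow, LinearMap.sub_apply,
    Module.End.mul_apply, Module.End.one_apply, Module.End.ofNat_apply, Pi.sub_apply,
    Pi.smul_apply, sequenceShift_pow_apply]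
  rw [ofNat_smul_eq_nsmul R 3]

end LinearRecurrence

section Cokernel

variable {m : Type} [Fintype m] [DecidableEq m] (M : Matrix m m ℤ)

/-- The class of the `j`-th standard basis vector in the cokernel of `M`. For the Laplacian of a
graph it is the class of the vertex `j`. -/
def basisClass (j : m) : cokerM M :=
  (LinearMap.range M.mulVecLin).mkQ (Pi.single j 1)

theorem span_range_basisClass : Submodule.span ℤ (Set.range (basisClass M)) = ⊤ := by
  have hrange : Set.range (basisClass M) =
      (LinearMap.range M.mulVecLin).mkQ '' Set.range (Pi.basisFun ℤ m) := by
    rw [← Set.range_comp]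
    exact congrArg Set.range (funext fun j => by simp [basisClass])
  rw [hrange, ← Submodule.map_span, (Pi.basisFun ℤ m).span_eq, Submodule.map_top,
    Submodule.range_mkQ]

variable {M} in
theorem finrank_cokerM_pos_of_det_eq_zero (hM : M.det = 0) :
    0 < Module.finrank ℤ (cokerM M) := by
  -- Pairing with a left null vector `w` of `M` is a nonzero functional that factors through the
  -- cokernel.
  obtain ⟨w, hw, hwM⟩ := Matrix.exists_vecMul_eq_zero_iff.2 hM
  obtain ⟨j, hj⟩ := Function.ne_iff.1 hw
  refine Nat.pos_of_ne_zero fun hfin => ?_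
  obtain ⟨a, ha⟩ := (Module.finrank_eq_zero_iff_isTorsion.1 hfin) (x := basisClass M j)
  obtain ⟨v, hv⟩ := (Submodule.Quotient.mk_eq_zero _).1 ha
  have hzero : (a : ℤ) * w j = 0 :=
    calc (a : ℤ) * w j
        = w ⬝ᵥ ((a : ℤ) • Pi.single j 1) := by
          rw [dotProduct_smul, dotProduct_single_one, smul_eq_mul]
      _ = w ⬝ᵥ M.mulVec v := congrArg (w ⬝ᵥ ·) hv.symm
      _ = 0 := by rw [Matrix.dotProduct_mulVec, hwM, zero_dotProduct]
  exact (mul_ne_zero (nonZeroDivisors.coe_ne_zero a) hj) hzero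

end Cokernel

section Laplacian

variable {V : Type} [Fintype V] [DecidableEq V] (G : SimpleGraph V) [DecidableRel G.Adj]

theorem det_lapMatrix_int_eq_zero [Nonempty V] : (G.lapMatrix ℤ).det = 0 :=
  Matrix.exists_mulVec_eq_zero_iff.1
    ⟨fun _ => 1, Function.const_ne_zero.2 one_ne_zero, G.lapMatrix_mulVec_const_eq_zero⟩

theorem lapMatrix_mulVec_single_one (x : V) :
    (G.lapMatrix ℤ).mulVec (Pi.single x 1) =
      (G.degree x : ℤ) • Pi.single x 1 - ∑ y ∈ G.neighborFinset x, Pi.single y 1 := by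
  ext w
  rw [SimpleGraph.lapMatrix_mulVec_apply]
  obtain rfl | hw := eq_or_ne w x
  · simp [Finset.sum_apply, Pi.single_apply]
  · simp [Finset.sum_apply, Pi.single_apply, hw, SimpleGraph.adj_comm]

theorem degree_smul_basisClass_lapMatrix (x : V) :
    (G.degree x : ℤ) • basisClass (G.lapMatrix ℤ) x =
      ∑ y ∈ G.neighborFinset x, basisClass (G.lapMatrix ℤ) y := by
  have hzero : (LinearMap.range (G.lapMatrix ℤ).mulVecLin).mkQ
      ((G.lapMatrix ℤ).mulVec (Pi.single x 1)) = 0 :=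
    (Submodule.Quotient.mk_eq_zero _).2 ⟨_, rfl⟩
  rwa [lapMatrix_mulVec_single_one, map_sub, map_smul, map_sum, sub_eq_zero] at hzero

variable {G} in
theorem three_smul_basisClass_lapMatrix {x a b c : V} (hx : G.neighborFinset x = {a, b, c})
    (hab : a ≠ b) (hac : a ≠ c) (hbc : b ≠ c) :
    (3 : ℤ) • basisClass (G.lapMatrix ℤ) x = basisClass (G.lapMatrix ℤ) a +
      basisClass (G.lapMatrix ℤ) b + basisClass (G.lapMatrix ℤ) c := by
  have hdeg : G.degree x = 3 := by
    rw [← G.card_neighborFinset_eq_degree, Finset.card_eq_three]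
    exact ⟨a, b, c, hab, hac, hbc, hx⟩
  have hsum := degree_smul_basisClass_lapMatrix G x
  rwa [hdeg, hx, Finset.sum_insert (by simp [hab, hac]), Finset.sum_pair hbc, ← add_assoc,
    Nat.cast_ofNat] at hsum

end Laplacian

section FpolyI

theorem isMonicOfDegree_X_pow_two_mul_sub {k : ℕ} (hk : 1 ≤ k) :
    IsMonicOfDegree (X ^ (2 * k) - (3 * X ^ k - 1) : ℤ[X]) (2 * k) := by
  have hdeg : (3 * X ^ k - 1 : ℤ[X]).natDegree ≤ k := by compute_degree
  exact (isMonicOfDegree_X_pow ℤ (2 * k)).sub (by omega)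

theorem isMonicOfDegree_FpolyI {k l : ℕ} (hk : 1 ≤ k) (hl : 1 ≤ l) :
    IsMonicOfDegree (FpolyI k l) (2 * k + 2 * l) := by
  have hF : FpolyI k l = (X ^ (2 * k) - (3 * X ^ k - 1)) * (X ^ (2 * l) - (3 * X ^ l - 1)) -
      X ^ (k + l) := by
    rw [FpolyI]
    ring
  rw [hF]
  refine ((isMonicOfDegree_X_pow_two_mul_sub hk).mul (isMonicOfDegree_X_pow_two_mul_sub hl)).sub ?_
  rw [natDegree_X_pow]
  omega

theorem aeval_FpolyI_apply_eq_zero {M : Type*} [AddCommGroup M] {T : Module.End ℤ M} {k l : ℕ}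
    {u v : M} (hu : aeval T (3 * X ^ l - X ^ (2 * l) - 1 : ℤ[X]) u = (T ^ l) v)
    (hv : aeval T (3 * X ^ k - X ^ (2 * k) - 1 : ℤ[X]) v = (T ^ k) u) :
    aeval T (FpolyI k l) u = 0 := by
  set P : ℤ[X] := 3 * X ^ k - X ^ (2 * k) - 1 with hP
  have hcomm : aeval T P ((T ^ l) v) = (T ^ (k + l)) u := by
    rw [add_comm, pow_add, Module.End.mul_apply, ← hv, ← aeval_X_pow (R := ℤ),
      ← Module.End.mul_apply, ← Module.End.mul_apply, ← map_mul, ← map_mul, mul_comm]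
  rw [FpolyI, ← hP, map_sub, map_mul, LinearMap.sub_apply, Module.End.mul_apply, hu, hcomm,
    aeval_X_pow, sub_self]

end FpolyI

section IGraph

variable {n k l : ℕ}

theorem natCast_zmod_ne_zero_of_lt {a : ℕ} (ha : 0 < a) (han : a < n) : (a : ZMod n) ≠ 0 := by
  rw [Ne, ZMod.natCast_eq_zero_iff]
  exact Nat.not_dvd_of_pos_of_lt ha han

theorem add_natCast_ne_sub_natCast {a : ℕ} (ha : 1 ≤ a) (han : 2 * a < n) (i : ZMod n) :
    i + a ≠ i - a := by
  intro h
  refine natCast_zmod_ne_zero_of_lt (by omega : 0 < 2 * a) han ?_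
  push_cast
  linear_combination h

variable [NeZero n]

theorem neighborFinset_IGraph_inl (hl : 1 ≤ l) (hn : 2 * l < n) (i : ZMod n) :
    (IGraph n k l).neighborFinset (.inl i) = {.inl (i + l), .inl (i - l), .inr i} := by
  have hl0 : (l : ZMod n) ≠ 0 := natCast_zmod_ne_zero_of_lt hl (by omega)
  ext w
  rw [SimpleGraph.mem_neighborFinset, IGraph, SimpleGraph.fromRel_adj]
  rcases w with j | j
  · simp only [IRel, ne_eq, Sum.inl.injEq, Finset.mem_insert, Finset.mem_singleton, reduceCtorEq,
      or_false]
    grind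
  · simp [IRel, eq_comm]

theorem neighborFinset_IGraph_inr (hk : 1 ≤ k) (hn : 2 * k < n) (i : ZMod n) :
    (IGraph n k l).neighborFinset (.inr i) = {.inr (i + k), .inr (i - k), .inl i} := by
  have hk0 : (k : ZMod n) ≠ 0 := natCast_zmod_ne_zero_of_lt hk (by omega)
  ext w
  rw [SimpleGraph.mem_neighborFinset, IGraph, SimpleGraph.fromRel_adj]
  rcases w with j | j
  · simp [IRel]
  · simp only [IRel, ne_eq, Sum.inr.injEq, Finset.mem_insert, Finset.mem_singleton, reduceCtorEq,
      or_false]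
    grind

theorem three_smul_basisClass_lapI_inl (hl : 1 ≤ l) (hn : 2 * l < n) (i : ZMod n) :
    (3 : ℤ) • basisClass (lapI n k l ℤ) (.inl i) = basisClass (lapI n k l ℤ) (.inl (i + l)) +
      basisClass (lapI n k l ℤ) (.inl (i - l)) + basisClass (lapI n k l ℤ) (.inr i) :=
  three_smul_basisClass_lapMatrix (neighborFinset_IGraph_inl hl hn i)
    (Sum.inl_injective.ne (add_natCast_ne_sub_natCast hl hn i)) Sum.inl_ne_inr Sum.inl_ne_inr

theorem three_smul_basisClass_lapI_inr (hk : 1 ≤ k) (hn : 2 * k < n) (i : ZMod n) :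
    (3 : ℤ) • basisClass (lapI n k l ℤ) (.inr i) = basisClass (lapI n k l ℤ) (.inr (i + k)) +
      basisClass (lapI n k l ℤ) (.inr (i - k)) + basisClass (lapI n k l ℤ) (.inl i) :=
  three_smul_basisClass_lapMatrix (neighborFinset_IGraph_inr hk hn i)
    (Sum.inr_injective.ne (add_natCast_ne_sub_natCast hk hn i)) Sum.inr_ne_inl Sum.inr_ne_inl

variable (n k l) in
/-- The sequence of classes of the vertices `u_0, u_1, …` of `I(n,k,l)` in the cokernel of the
Laplacian, continued `n`-periodically so that shifting it makes sense. -/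
noncomputable def uClass (j : ℕ) : cokerM (lapI n k l ℤ) :=
  basisClass (lapI n k l ℤ) (.inl j)

variable (n k l) in
/-- The sequence of classes of the vertices `v_0, v_1, …` of `I(n,k,l)` in the cokernel of the
Laplacian, continued `n`-periodically so that shifting it makes sense. -/
noncomputable def vClass (j : ℕ) : cokerM (lapI n k l ℤ) :=
  basisClass (lapI n k l ℤ) (.inr j)

theorem aeval_sequenceShift_uClass (hl : 1 ≤ l) (hn : 2 * l < n) :
    aeval (sequenceShift ℤ _) (3 * X ^ l - X ^ (2 * l) - 1 : ℤ[X]) (uClass n k l) =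
      (sequenceShift ℤ _ ^ l) (vClass n k l) := by
  ext j
  have h := three_smul_basisClass_lapI_inl (k := k) hl hn ((j + l : ℕ) : ZMod n)
  have hadd : ((j + l : ℕ) : ZMod n) + l = (j + 2 * l : ℕ) := by push_cast; ring
  have hsub : ((j + l : ℕ) : ZMod n) - l = j := by push_cast; ring
  rw [hadd, hsub] at h
  rw [aeval_three_mul_X_pow_sub_apply, sequenceShift_pow_apply, uClass, uClass, uClass, vClass, h]
  abel

theorem aeval_sequenceShift_vClass (hk : 1 ≤ k) (hn : 2 * k < n) :
    aeval (sequenceShift ℤ _) (3 * X ^ k - X ^ (2 * k) - 1 : ℤ[X]) (vClass n k l) =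
      (sequenceShift ℤ _ ^ k) (uClass n k l) := by
  ext j
  have h := three_smul_basisClass_lapI_inr (l := l) hk hn ((j + k : ℕ) : ZMod n)
  have hadd : ((j + k : ℕ) : ZMod n) + k = (j + 2 * k : ℕ) := by push_cast; ring
  have hsub : ((j + k : ℕ) : ZMod n) - k = j := by push_cast; ring
  rw [hadd, hsub] at h
  rw [aeval_three_mul_X_pow_sub_apply, sequenceShift_pow_apply, vClass, vClass, vClass, uClass, h]
  abel

theorem span_uClass_image_Iio (hk : 1 ≤ k) (hl : 1 ≤ l) (hkn : 2 * k < n) (hln : 2 * l < n) :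
    Submodule.span ℤ (uClass n k l '' Set.Iio (2 * k + 2 * l)) = ⊤ := by
  set W := Submodule.span ℤ (uClass n k l '' Set.Iio (2 * k + 2 * l))
  have hu (i : ZMod n) : basisClass (lapI n k l ℤ) (.inl i) ∈ W := by
    have hrec := aeval_FpolyI_apply_eq_zero (aeval_sequenceShift_uClass (k := k) hl hln)
      (aeval_sequenceShift_vClass hk hkn)
    have hmem := apply_mem_span_of_aeval_sequenceShift_eq_zero (isMonicOfDegree_FpolyI hk hl) hrec
      i.val
    rwa [uClass, ZMod.natCast_zmod_val] at hmem
  have hv (i : ZMod n) : basisClass (lapI n k l ℤ) (.inr i) ∈ W := by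
    rw [← sub_eq_iff_eq_add'.2 (three_smul_basisClass_lapI_inl hl hln i)]
    exact W.sub_mem (W.smul_mem 3 (hu i)) (W.add_mem (hu _) (hu _))
  rw [← top_le_iff, ← span_range_basisClass, Submodule.span_le]
  rintro _ ⟨i | i, rfl⟩
  exacts [hu i, hv i]

theorem spanFinrank_cokerM_lapI_le (hk : 1 ≤ k) (hl : 1 ≤ l) (hkn : 2 * k < n)
    (hln : 2 * l < n) :
    (⊤ : Submodule ℤ (cokerM (lapI n k l ℤ))).spanFinrank ≤ 2 * k + 2 * l := by
  rw [← span_uClass_image_Iio hk hl hkn hln]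
  calc (Submodule.span ℤ (uClass n k l '' Set.Iio (2 * k + 2 * l))).spanFinrank
      ≤ (uClass n k l '' Set.Iio (2 * k + 2 * l)).ncard :=
        Submodule.spanFinrank_span_le_ncard_of_finite ((Set.finite_Iio _).image _)
    _ ≤ (Set.Iio (2 * k + 2 * l)).ncard := Set.ncard_image_le (Set.finite_Iio _)
    _ = 2 * k + 2 * l := by simp

end IGraph

theorem jacobian_IGraph_generators_general (n k l : ℕ) [NeZero n]
    (hk : 1 ≤ k) (hl : 1 ≤ l) (hkn : 2 * k < n) (hln : 2 * l < n) :
    ∃ S : Finset (JacI n k l), S.card ≤ 2 * k + 2 * l - 1 ∧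
      AddSubgroup.closure (S : Set (JacI n k l)) = ⊤ := by
  obtain ⟨S, hcard, hclosure⟩ := exists_finset_closure_torsion_eq_top (cokerM (lapI n k l ℤ))
  have hrank : 0 < Module.finrank ℤ (cokerM (lapI n k l ℤ)) :=
    finrank_cokerM_pos_of_det_eq_zero (det_lapMatrix_int_eq_zero (IGraph n k l))
  have hspan := spanFinrank_cokerM_lapI_le hk hl hkn hln
  have hle : S.card ≤ 2 * k + 2 * l - 1 := by omega
  exact ⟨S, hle, hclosure⟩

/-- The Jacobian group of the I-graph `I(n,k,l)` is generated by at most `2k + 2l - 1`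
elements. -/
theorem jacobian_IGraph_generators (n k l : ℕ) [NeZero n]
    (hk : 1 ≤ k) (hkl : k ≤ l) (hn : 2 * l < n) (hcop : Nat.gcd k l = 1) :
    ∃ S : Finset (JacI n k l), S.card ≤ 2 * k + 2 * l - 1 ∧
      AddSubgroup.closure (S : Set (JacI n k l)) = ⊤ :=
  jacobian_IGraph_generators_general n k l hk (hk.trans hkl) (by omega) hn
end
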